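/- arXiv:2109.04944 — 6 statements merged into one kernel-verified Lean document; each statement's English description precedes it below -/
import Mathlib

section
/- There exists an absolute constant c > 0 such that every induced D₂-free 3-uniform hypergraph on n vertices contains a clique or an independent set of size at least n^c. -/
open Finset

/-- A 3-uniform hypergraph is induced `D₂`-free if no 4 vertices span exactly 2 edges. -/
def InducedD2Free {V : Type} [Fintype V] [DecidableEq V] (E : Finset (Finset V)) : Prop :=
  ∀ S : Finset V, S.card = 4 → (E.filter (fun e => e ⊆ S)).card ≠ 2

/-- `S` is a clique of the 3-uniform hypergraph `E`: every 3-subset of `S` is an edge. -/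
def IsHClique {V : Type} [DecidableEq V] (E : Finset (Finset V)) (S : Finset V) : Prop :=
  ∀ t ⊆ S, t.card = 3 → t ∈ E

/-- `S` is an independent set of the 3-uniform hypergraph `E`. -/
def IsHIndep {V : Type} [DecidableEq V] (E : Finset (Finset V)) (S : Finset V) : Prop :=
  ∀ t ⊆ S, t.card = 3 → t ∉ E


structure D2T {V : Type} (T : V → V → V → Prop) : Prop where
  s1 : ∀ a b c, T a b c → T b a c
  s2 : ∀ a b c, T a b c → T a c b
  q : ∀ a b c d, a ≠ b → a ≠ c → a ≠ d → b ≠ c → b ≠ d → c ≠ d →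
    T a b c → T a b d → T a c d ∨ T b c d

theorem D2T.compl {V : Type} {T : V → V → V → Prop} (h : D2T T) :
    D2T (fun a b c => ¬ T a b c) where
  s1 := fun a b c hn ht => hn (h.s1 _ _ _ ht)
  s2 := fun a b c hn ht => hn (h.s2 _ _ _ ht)
  q := by
    intro a b c d ab ac ad bc bd cd h1 h2
    by_contra hcon
    push Not at hcon
    obtain ⟨h3, h4⟩ := hcon
    have e1 : T c d a := h.s2 _ _ _ (h.s1 _ _ _ h3)
    have e2 : T c d b := h.s2 _ _ _ (h.s1 _ _ _ h4)
    rcases h.q c d a b cd ac.symm bc.symm ad.symm bd.symm ab e1 e2 with h5 | h5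
    · exact h1 (h.s2 _ _ _ (h.s1 _ _ _ h5))
    · exact h2 (h.s2 _ _ _ (h.s1 _ _ _ h5))

theorem D2T.rot {V : Type} {T : V → V → V → Prop} (h : D2T T) {a b c : V} (ht : T a b c) :
    T b c a := h.s2 _ _ _ (h.s1 _ _ _ ht)

/-- induced P4-freeness of links -/
theorem D2T.p4 {V : Type} {T : V → V → V → Prop} (h : D2T T) {v a b c d : V}
    (va : v ≠ a) (vb : v ≠ b) (vc : v ≠ c) (vd : v ≠ d)
    (ab : a ≠ b) (ac : a ≠ c) (ad : a ≠ d) (bc : b ≠ c) (bd : b ≠ d) (cd : c ≠ d)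
    (h1 : T v a b) (h2 : T v b c) (h3 : T v c d) (n1 : ¬ T v a c) (n2 : ¬ T v b d)
    (n3 : ¬ T v a d) : False := by
  have e1 := h.q v b a c vb va vc ab.symm bc ac (h.s2 _ _ _ h1) h2
  have e2 := h.q v c b d vc vb vd bc.symm cd bd (h.s2 _ _ _ h2) h3
  rcases e1 with e1 | e1
  · exact n1 e1
  rcases e2 with e2 | e2
  · exact n2 e2
  have e3 := h.q b c a d bc ab.symm bd ac.symm cd ad (h.s2 _ _ _ e1) (h.s1 _ _ _ e2)
  rcases e3 with e3 | e3
  · rcases h.q a b v d ab va.symm ad vb.symm bd vd (h.rot h1) (h.s1 _ _ _ e3) with k | k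
    · exact n3 (h.s1 _ _ _ k)
    · exact n2 (h.s1 _ _ _ k)
  · rcases h.q c d v a cd vc.symm ac.symm vd.symm ad.symm va (h.rot h3) (h.s2 _ _ _ e3) with k | k
    · exact n1 (h.rot k)
    · exact n3 (h.rot k)

/-- P4-free relation, on a predicate of distinct points -/
structure P4F {V : Type} (r : V → V → Prop) : Prop where
  symm : ∀ a b, r a b → r b a
  p4 : ∀ a b c d, a ≠ b → a ≠ c → a ≠ d → b ≠ c → b ≠ d → c ≠ d →
    r a b → r b c → r c d → ¬ r a c → ¬ r b d → ¬ r a d → False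

theorem P4F.compl {V : Type} {r : V → V → Prop} (h : P4F r) : P4F (fun a b => ¬ r a b) where
  symm := fun a b hn hr => hn (h.symm _ _ hr)
  p4 := by
    intro a b c d ab ac ad bc bd cd h1 h2 h3 h4 h5 h6
    simp only [not_not] at h4 h5 h6
    exact h.p4 b d a c bd ab.symm bc ad.symm cd.symm ac h5 (h.symm _ _ h6) h4
      (fun k => h1 (h.symm _ _ k)) (fun k => h3 (h.symm _ _ k)) h2

/-- distance at most two inside U -/
def Rel2 {V : Type} (r : V → V → Prop) (U : Finset V) (a b : V) : Prop :=
  a = b ∨ r a b ∨ ∃ d ∈ U, d ≠ a ∧ d ≠ b ∧ r a d ∧ r d b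

theorem Rel2.symm {V : Type} {r : V → V → Prop} (h : P4F r) {U : Finset V} {a b : V}
    (k : Rel2 r U a b) : Rel2 r U b a := by
  rcases k with k | k | ⟨d, hd, h1, h2, h3, h4⟩
  · exact Or.inl k.symm
  · exact Or.inr (Or.inl (h.symm _ _ k))
  · exact Or.inr (Or.inr ⟨d, hd, h2, h1, h.symm _ _ h4, h.symm _ _ h3⟩)

theorem Rel2.step {V : Type} {r : V → V → Prop} (h : P4F r) {U : Finset V} {a b c : V}
    (hb : b ∈ U) (k : Rel2 r U a b) (bc : b ≠ c) (hr : r b c) : Rel2 r U a c := by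
  by_cases ac : a = c
  · exact Or.inl ac
  rcases k with k | k | ⟨d, hd, h1, h2, h3, h4⟩
  · subst k; exact Or.inr (Or.inl hr)
  · by_cases ab : a = b
    · subst ab; exact Or.inr (Or.inl hr)
    · exact Or.inr (Or.inr ⟨b, hb, fun e => ab e.symm, bc, k, hr⟩)
  · by_cases ab : a = b
    · subst ab; exact Or.inr (Or.inl hr)
    by_cases dc : d = c
    · subst dc; exact Or.inr (Or.inl h3)
    by_cases e1 : r a c
    · exact Or.inr (Or.inl e1)
    by_cases e2 : r a b
    · exact Or.inr (Or.inr ⟨b, hb, fun e => ab e.symm, bc, e2, hr⟩)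
    by_cases e3 : r d c
    · exact Or.inr (Or.inr ⟨d, hd, h1, dc, h3, e3⟩)
    exact (h.p4 a d b c h1.symm ab ac h2 dc bc h3 h4 hr e2 e3 e1).elim

theorem Rel2.trans {V : Type} {r : V → V → Prop} (h : P4F r) {U : Finset V} {a b c : V}
    (hb : b ∈ U) (k : Rel2 r U a b) (k' : Rel2 r U b c) : Rel2 r U a c := by
  rcases k' with k' | k' | ⟨d, hd, h1, h2, h3, h4⟩
  · subst k'; exact k
  · by_cases bc : b = c
    · subst bc; exact k
    · exact k.step h hb bc k'
  · exact (k.step h hb h1.symm h3).step h hd h2 h4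

/-- A P4-free graph on at least two vertices: disconnected or co-disconnected -/
def Cut {V : Type} (r : V → V → Prop) (U : Finset V) : Prop :=
  ∃ A : V → Prop, (∃ a ∈ U, A a) ∧ (∃ b ∈ U, ¬ A b) ∧ ∀ a ∈ U, ∀ b ∈ U, A a → ¬ A b → ¬ r a b

theorem cut_insert {V : Type} {r : V → V → Prop} (h : P4F r) [DecidableEq V] {U : Finset V} {u : V}
    (hu : u ∉ U) (hc : Cut r U) : Cut r (insert u U) ∨ Cut (fun a b => ¬ r a b) (insert u U) := by
  by_contra hcon
  push Not at hcon
  obtain ⟨hn1, hn2⟩ := hcon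
  obtain ⟨A, ⟨a, ha, hAa⟩, ⟨b, hb, hAb⟩, hAB⟩ := hc
  have hAB2 : ∀ x ∈ U, ∀ y ∈ U, Rel2 r U x y → A x → A y := by
    intro x hx y hy k hAx
    by_contra hAy
    rcases k with k | k | ⟨d, hd, h1, h2, h3, h4⟩
    · subst k; exact hAy hAx
    · exact hAB x hx y hy hAx hAy k
    · by_cases hAd : A d
      · exact hAB d hd y hy hAd hAy h4
      · exact hAB x hx d hd hAx hAd h3
  have hne : ∀ x ∈ U, x ≠ u := fun x hx e => hu (e ▸ hx)
  -- u has a neighbour in each class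
  have hnb : ∀ x ∈ U, ∃ y ∈ U, Rel2 r U x y ∧ r u y := by
    intro x hx
    by_contra hno
    push Not at hno
    apply hn1
    refine ⟨fun y => y ∈ U ∧ Rel2 r U x y, ⟨x, mem_insert_of_mem hx, hx, Or.inl rfl⟩,
      ⟨u, mem_insert_self _ _, fun k => hu k.1⟩, ?_⟩
    intro p hp q hq hPp hPq hpq
    rcases mem_insert.1 hq with e | hqU
    · subst e
      exact hno p hPp.1 hPp.2 (h.symm _ _ hpq)
    · apply hPq
      refine ⟨hqU, ?_⟩
      by_cases e : p = q
      · subst e; exact hPp.2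
      · exact hPp.2.step h hPp.1 e hpq
  -- u has a non-neighbour
  have hw : ∃ w ∈ U, ¬ r u w := by
    by_contra hno
    push Not at hno
    apply hn2
    refine ⟨fun y => y = u, ⟨u, mem_insert_self _ _, rfl⟩, ⟨a, mem_insert_of_mem ha, hne a ha⟩, ?_⟩
    intro p hp q hq hPp hPq
    subst hPp
    simp only [not_not]
    exact hno q ((mem_insert.1 hq).resolve_left hPq)
  obtain ⟨w, hw, hruw⟩ := hw
  obtain ⟨p, hp, hwp, hup⟩ := hnb w hw
  -- adjacent p q in class of w
  have hpq : ∃ p ∈ U, ∃ q ∈ U, p ≠ q ∧ Rel2 r U w p ∧ Rel2 r U w q ∧ r p q ∧ r u p ∧ ¬ r u q := by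
    rcases hwp.symm h with k | k | ⟨d, hd, h1, h2, h3, h4⟩
    · subst k; exact absurd hup hruw
    · exact ⟨p, hp, w, hw, fun e => hruw (e ▸ hup), hwp, Or.inl rfl, k, hup, hruw⟩
    · have hwd : Rel2 r U w d := Or.inr (Or.inl (h.symm _ _ h4))
      by_cases hud : r u d
      · exact ⟨d, hd, w, hw, h2, hwd, Or.inl rfl, h4, hud, hruw⟩
      · exact ⟨p, hp, d, hd, h1.symm, hwp, hwd, h3, hup, hud⟩
  obtain ⟨p, hp, q, hq, hpqne, hwp, hwq, hrpq, hup, huq⟩ := hpq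
  have hx : ∃ x ∈ U, ¬ Rel2 r U w x := by
    by_cases hAw : A w
    · exact ⟨b, hb, fun k => hAb (hAB2 w hw b hb k hAw)⟩
    · exact ⟨a, ha, fun k => hAw (hAB2 a ha w hw (k.symm h) hAa)⟩
  obtain ⟨x, hx, hwx⟩ := hx
  obtain ⟨y, hy, hxy, huy⟩ := hnb x hx
  have hwy : ¬ Rel2 r U w y := fun k => hwx (k.trans h hy (hxy.symm h))
  have yp : y ≠ p := fun e => hwy (e ▸ hwp)
  have yq : y ≠ q := fun e => hwy (e ▸ hwq)
  refine h.p4 y u p q (hne y hy) yp yq (hne p hp).symm (hne q hq).symm hpqne (h.symm _ _ huy) hup hrpq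
    (fun k => ?_) huq (fun k => ?_)
  · exact hwy (hwp.step h hp yp.symm (h.symm _ _ k))
  · exact hwy (hwq.step h hq yq.symm (h.symm _ _ k))

theorem cut_exists {V : Type} {r : V → V → Prop} (h : P4F r) [DecidableEq V] (U : Finset V) :
    2 ≤ U.card → Cut r U ∨ Cut (fun a b => ¬ r a b) U := by
  induction U using Finset.induction_on with
  | empty => intro h; simp at h
  | insert u U hu ih =>
    intro hc
    rw [card_insert_of_notMem hu] at hc
    by_cases h1 : U.card = 1
    · obtain ⟨w, rfl⟩ := card_eq_one.1 h1
      have hwu : w ≠ u := fun e => hu (by simp [e])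
      by_cases hr : r u w
      · right
        refine ⟨fun y => y = u, ⟨u, by simp, rfl⟩, ⟨w, by simp, hwu⟩, ?_⟩
        intro a ha b hb hA hB
        simp only [mem_insert, mem_singleton] at hb
        subst hA
        rcases hb with hb | hb
        · exact absurd hb hB
        · subst hb; simpa using hr
      · left
        refine ⟨fun y => y = u, ⟨u, by simp, rfl⟩, ⟨w, by simp, hwu⟩, ?_⟩
        intro a ha b hb hA hB
        simp only [mem_insert, mem_singleton] at hb
        subst hA
        rcases hb with hb | hb
        · exact absurd hb hB
        · subst hb; exact hr
    · rcases ih (by omega) with k | k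
      · exact cut_insert h hu k
      · have := cut_insert h.compl hu k
        simp only [not_not] at this
        exact this.symm

def lk {V : Type} (T : V → V → V → Prop) (v : V) (a b : V) : Prop := a ≠ v ∧ b ≠ v ∧ T v a b

theorem lk_p4 {V : Type} {T : V → V → V → Prop} (h : D2T T) (v : V) : P4F (lk T v) where
  symm := fun a b hr => ⟨hr.2.1, hr.1, h.s2 _ _ _ hr.2.2⟩
  p4 := by
    intro a b c d ab ac ad bc bd cd h1 h2 h3 n1 n2 n3
    have av := h1.1
    have bv := h1.2.1
    have cv := h2.2.1
    have dv := h3.2.1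
    exact h.p4 av.symm bv.symm cv.symm dv.symm ab ac ad bc bd cd h1.2.2 h2.2.2 h3.2.2
      (fun k => n1 ⟨av, cv, k⟩) (fun k => n2 ⟨bv, dv, k⟩) (fun k => n3 ⟨av, dv, k⟩)

open Classical in
noncomputable def ln {V : Type} [DecidableEq V] (T : V → V → V → Prop) (U : Finset V) (v a : V) : Finset V :=
  insert v ((U.erase v).filter (fun b => Rel2 (lk T v) (U.erase v) a b))

theorem mem_ln {V : Type} [DecidableEq V] {T : V → V → V → Prop} {U : Finset V} {v a x : V} :
    x ∈ ln T U v a ↔ x = v ∨ (x ≠ v ∧ x ∈ U ∧ Rel2 (lk T v) (U.erase v) a x) := by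
  classical
  simp only [ln, mem_insert, mem_filter, mem_erase, and_assoc]

def Cl {V : Type} [DecidableEq V] (T : V → V → V → Prop) (U W : Finset V) : Prop :=
  ∀ a ∈ W, ∀ b ∈ W, ∀ c ∈ U, a ≠ b → a ≠ c → b ≠ c → T a b c → c ∈ W

theorem ln_sub {V : Type} [DecidableEq V] {T : V → V → V → Prop} {U : Finset V} {v a : V} (hv : v ∈ U) :
    ln T U v a ⊆ U := by
  intro x hx
  rcases mem_ln.1 hx with rfl | h
  · exact hv
  · exact h.2.1

theorem left_mem_ln {V : Type} [DecidableEq V] {T : V → V → V → Prop} {U : Finset V} {v a : V} :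
    v ∈ ln T U v a := mem_ln.2 (Or.inl rfl)

theorem right_mem_ln {V : Type} [DecidableEq V] {T : V → V → V → Prop} {U : Finset V} {v a : V} (ha : a ∈ U) :
    a ∈ ln T U v a := by
  by_cases h : a = v
  · exact mem_ln.2 (Or.inl h)
  · exact mem_ln.2 (Or.inr ⟨h, ha, Or.inl rfl⟩)

theorem ln_cl {V : Type} [DecidableEq V] {T : V → V → V → Prop} (h : D2T T) {U : Finset V} {v a : V} (hv : v ∈ U)
    (ha : a ∈ U) (hav : a ≠ v) : Cl T U (ln T U v a) := by
  classical
  have hp := lk_p4 h v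
  -- one point equal to v
  have key1 : ∀ x ∈ ln T U v a, x ≠ v → ∀ z ∈ U, z ≠ v → z ≠ x → T v x z → z ∈ ln T U v a := by
    intro x hx hxv z hz hzv hzx ht
    have hx' := (mem_ln.1 hx).resolve_left hxv
    exact mem_ln.2 (Or.inr ⟨hzv, hz, hx'.2.2.step hp (mem_erase.2 ⟨hxv, hx'.2.1⟩) hzx.symm
      ⟨hxv, hzv, ht⟩⟩)
  -- adjacent pair in the class
  have key2 : ∀ x ∈ ln T U v a, x ≠ v → ∀ y ∈ ln T U v a, y ≠ v → x ≠ y → T v x y →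
      ∀ z ∈ U, z ≠ x → z ≠ y → T x y z → z ∈ ln T U v a := by
    intro x hx hxv y hy hyv hxy hadj z hz hzx hzy ht
    by_cases hzv : z = v
    · subst hzv; exact left_mem_ln
    rcases h.q x y v z hxy hxv hzx.symm hyv hzy.symm (Ne.symm hzv) (h.rot hadj) ht with k | k
    · exact key1 x hx hxv z hz hzv hzx (h.s1 _ _ _ k)
    · exact key1 y hy hyv z hz hzv hzy (h.s1 _ _ _ k)
  intro x hx y hy z hz hxy hxz hyz ht
  by_cases hzv : z = v
  · subst hzv; exact left_mem_ln
  by_cases hxv : x = v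
  · subst hxv
    exact key1 y hy hxy.symm z hz hzv hyz.symm ht
  by_cases hyv : y = v
  · subst hyv
    exact key1 x hx hxv z hz hzv hxz.symm (h.s1 _ _ _ ht)
  have hx' := (mem_ln.1 hx).resolve_left hxv
  have hy' := (mem_ln.1 hy).resolve_left hyv
  have hxyR : Rel2 (lk T v) (U.erase v) x y :=
    (hx'.2.2.symm hp).trans hp (mem_erase.2 ⟨hav, ha⟩) hy'.2.2
  rcases hxyR with k | k | ⟨d, hd, h1, h2, h3, h4⟩
  · exact absurd k hxy
  · exact key2 x hx hxv y hy hyv hxy k.2.2 z hz hxz.symm hyz.symm ht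
  by_cases hadj : T v x y
  · exact key2 x hx hxv y hy hyv hxy hadj z hz hxz.symm hyz.symm ht
  have hdv := h3.2.1
  have hdU := (mem_erase.1 hd).2
  have hdl : d ∈ ln T U v a := key1 x hx hxv d hdU hdv h1 h3.2.2
  by_cases hdz : d = z
  · subst hdz; exact hdl
  -- T x y d
  have hxyd : T x y d := by
    rcases h.q v d x y (Ne.symm hdv) (Ne.symm hxv) (Ne.symm hyv) h1 h2 hxy
      (h.s2 _ _ _ h3.2.2) h4.2.2 with k | k
    · exact absurd k hadj
    · exact h.rot k
  rcases h.q x y z d hxy hxz h1.symm hyz h2.symm (Ne.symm hdz) ht hxyd with k | k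
  · exact key2 x hx hxv d hdl hdv h1.symm h3.2.2 z hz hxz.symm (Ne.symm hdz) (h.s2 _ _ _ k)
  · exact key2 d hdl hdv y hy hyv h2 h4.2.2 z hz (Ne.symm hdz) hyz.symm (h.rot (h.rot k))

theorem ln_min {V : Type} [DecidableEq V] {T : V → V → V → Prop} {U W : Finset V} {v a : V}
    (hW : Cl T U W) (hv : v ∈ W) (ha : a ∈ W) : ln T U v a ⊆ W := by
  classical
  intro x hx
  rcases mem_ln.1 hx with rfl | ⟨hxv, hxU, k⟩
  · exact hv
  rcases k with k | k | ⟨d, hd, h1, h2, h3, h4⟩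
  · subst k; exact ha
  · by_cases e : a = x
    · subst e; exact ha
    · exact hW v hv a ha x hxU k.1.symm hxv.symm e k.2.2
  · have hdW : d ∈ W := hW v hv a ha d (mem_erase.1 hd).2 h3.1.symm h3.2.1.symm h1.symm h3.2.2
    exact hW v hv d hdW x hxU h4.1.symm hxv.symm h2 h4.2.2

theorem ln_comm {V : Type} [DecidableEq V] {T : V → V → V → Prop} (h : D2T T) {U : Finset V} {v a : V} (hv : v ∈ U)
    (ha : a ∈ U) (hav : a ≠ v) : ln T U v a = ln T U a v :=
  Subset.antisymm (ln_min (ln_cl h ha hv hav.symm) (right_mem_ln hv) left_mem_ln)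
    (ln_min (ln_cl h hv ha hav) (right_mem_ln ha) left_mem_ln)

theorem ln_exch {V : Type} [DecidableEq V] {T : V → V → V → Prop} (h : D2T T) {U : Finset V} {v a x : V}
    (ha : a ∈ U) (hav : a ≠ v) (hx : x ∈ ln T U v a) (hxv : x ≠ v) : ln T U v x = ln T U v a := by
  classical
  have hp := lk_p4 h v
  have hx' := (mem_ln.1 hx).resolve_left hxv
  have hxe : x ∈ U.erase v := mem_erase.2 ⟨hxv, hx'.2.1⟩
  have hae : a ∈ U.erase v := mem_erase.2 ⟨hav, ha⟩
  ext y
  rw [mem_ln, mem_ln]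
  constructor
  · rintro (k | ⟨h1, h2, h3⟩)
    · exact Or.inl k
    · exact Or.inr ⟨h1, h2, hx'.2.2.trans hp hxe h3⟩
  · rintro (k | ⟨h1, h2, h3⟩)
    · exact Or.inl k
    · exact Or.inr ⟨h1, h2, (hx'.2.2.symm hp).trans hp hae h3⟩

theorem ln_eq {V : Type} [DecidableEq V] {T : V → V → V → Prop} (h : D2T T) {U : Finset V} {v a x y : V}
    (hv : v ∈ U) (ha : a ∈ U) (hav : a ≠ v) (hx : x ∈ ln T U v a) (hy : y ∈ ln T U v a)
    (hxy : x ≠ y) : ln T U x y = ln T U v a := by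
  by_cases hxv : x = v
  · subst hxv; exact ln_exch h ha hav hy hxy.symm
  · have hxU := ln_sub hv hx
    have e1 : ln T U x v = ln T U v a := by
      rw [← ln_comm h hv hxU hxv]; exact ln_exch h ha hav hx hxv
    rw [← e1]
    exact ln_exch h hv (Ne.symm hxv) (e1 ▸ hy) hxy.symm

/-- Line families. -/
structure LF {V : Type} [DecidableEq V] (T : V → V → V → Prop) (U : Finset V)
    (F : Finset (Finset V)) : Prop where
  sub : ∀ L ∈ F, L ⊂ U
  inter : ∀ L ∈ F, ∀ M ∈ F, ∀ x ∈ L, ∀ y ∈ L, x ≠ y → x ∈ M → y ∈ M → L = M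
  cov : ∀ a ∈ U, ∀ b ∈ U, ∀ c ∈ U, a ≠ b → a ≠ c → b ≠ c → T a b c →
    ∃ L ∈ F, a ∈ L ∧ b ∈ L ∧ c ∈ L

theorem LF_of_cut {V : Type} [DecidableEq V] {T : V → V → V → Prop} (h : D2T T) {U : Finset V}
    {v : V} (hv : v ∈ U) (hc : Cut (lk T v) (U.erase v)) : ∃ F, LF T U F := by
  classical
  have hprop : ∀ a ∈ U, ∀ b ∈ U, b ≠ a → ln T U a b ≠ U := by
    intro a ha b hb hba heq
    obtain ⟨A, ⟨p, hp, hAp⟩, ⟨q, hq, hAq⟩, hAB⟩ := hc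
    obtain ⟨hpv, hpU⟩ := mem_erase.1 hp
    obtain ⟨hqv, hqU⟩ := mem_erase.1 hq
    have e := ln_eq h ha hb hba (by rw [heq]; exact hv) (by rw [heq]; exact hpU) hpv.symm
    have hq2 : q ∈ ln T U v p := by rw [e, heq]; exact hqU
    have k := ((mem_ln.1 hq2).resolve_left hqv).2.2
    rcases k with k | k | ⟨d, hd, h1, h2, h3, h4⟩
    · subst k; exact hAq hAp
    · exact hAB p hp q hq hAp hAq k
    · by_cases hAd : A d
      · exact hAB d hd q hq hAd hAq h4
      · exact hAB p hp d hd hAp hAd h3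
  refine ⟨U.offDiag.image (fun p => ln T U p.1 p.2), ?_, ?_, ?_⟩
  · intro L hL
    obtain ⟨⟨a, b⟩, hab, rfl⟩ := mem_image.1 hL
    obtain ⟨ha, hb, hne⟩ := mem_offDiag.1 hab
    exact (ln_sub ha).ssubset_of_ne (hprop a ha b hb hne.symm)
  · intro L hL M hM x hx y hy hxy hx' hy'
    obtain ⟨⟨a, b⟩, hab, rfl⟩ := mem_image.1 hL
    obtain ⟨ha, hb, hne⟩ := mem_offDiag.1 hab
    obtain ⟨⟨a', b'⟩, hab', rfl⟩ := mem_image.1 hM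
    obtain ⟨ha', hb', hne'⟩ := mem_offDiag.1 hab'
    exact (ln_eq h ha hb hne.symm hx hy hxy).symm.trans (ln_eq h ha' hb' hne'.symm hx' hy' hxy)
  · intro a ha b hb c hc' hab hac hbc ht
    refine ⟨ln T U a b, mem_image.2 ⟨(a, b), mem_offDiag.2 ⟨ha, hb, hab⟩, rfl⟩, left_mem_ln,
      right_mem_ln hb, ?_⟩
    exact mem_ln.2 (Or.inr ⟨hac.symm, hc', Or.inr (Or.inl ⟨hab.symm, hac.symm, ht⟩)⟩)

theorem LF_exists {V : Type} [DecidableEq V] {T : V → V → V → Prop} (h : D2T T) {U : Finset V}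
    (hU : 3 ≤ U.card) : (∃ F, LF T U F) ∨ (∃ F, LF (fun a b c => ¬ T a b c) U F) := by
  obtain ⟨v, hv⟩ : U.Nonempty := card_pos.1 (by omega)
  rcases cut_exists (lk_p4 h v) (U.erase v) (by rw [card_erase_of_mem hv]; omega) with k | k
  · exact Or.inl (LF_of_cut h hv k)
  · right
    apply LF_of_cut h.compl hv
    obtain ⟨A, h1, h2, h3⟩ := k
    refine ⟨A, h1, h2, fun a ha b hb hA hB k => ?_⟩
    exact h3 a ha b hb hA hB (fun k' => k.2.2 k'.2.2)

def Ind {V : Type} (T : V → V → V → Prop) (S : Finset V) : Prop :=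
  ∀ a ∈ S, ∀ b ∈ S, ∀ c ∈ S, a ≠ b → a ≠ c → b ≠ c → ¬ T a b c

theorem ext_line {V : Type} [DecidableEq V] {T : V → V → V → Prop} (h : D2T T) {U : Finset V}
    {F : Finset (Finset V)} (hF : LF T U F) {S L A : Finset V} (hS : S ⊆ U) (hSI : Ind T S)
    (hL : L ∈ F) (hSL : ∀ s ∈ S, s ∉ L) (hA : A ⊆ L) :
    ∃ A' ⊆ A, A.card ≤ A'.card + (S.card * S.card - S.card) ∧
      ∀ S' ⊆ A', Ind T S' → Ind T (S ∪ S') ∧ (S ∪ S').card = S.card + S'.card := by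
  classical
  have hLU := (hF.sub L hL).1
  set B : Finset V := S.offDiag.biUnion (fun p => A.filter (fun y => T p.1 p.2 y)) with hB
  have hBc : B.card ≤ S.card * S.card - S.card := by
    rw [← offDiag_card]
    calc B.card ≤ S.offDiag.card * 1 := by
          apply card_biUnion_le_card_mul
          rintro ⟨s, s'⟩ hp
          obtain ⟨hs, hs', hne⟩ := mem_offDiag.1 hp
          simp only at hs hs' hne
          rw [card_le_one]
          intro y hy y' hy'
          simp only [mem_filter] at hy hy'
          by_contra hyy
          have hyL := hA hy.1
          have hyL' := hA hy'.1
          have n1 : s ≠ y := fun e => hSL s hs (e ▸ hyL)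
          have n2 : s' ≠ y := fun e => hSL s' hs' (e ▸ hyL)
          have n3 : s ≠ y' := fun e => hSL s hs (e ▸ hyL')
          have n4 : s' ≠ y' := fun e => hSL s' hs' (e ▸ hyL')
          obtain ⟨M, hM, m1, m2, m3⟩ := hF.cov s (hS hs) s' (hS hs') y (hLU hyL) hne n1 n2 hy.2
          obtain ⟨M', hM', m1', m2', m3'⟩ :=
            hF.cov s (hS hs) s' (hS hs') y' (hLU hyL') hne n3 n4 hy'.2
          have e := hF.inter M hM M' hM' s m1 s' m2 hne m1' m2'
          subst e
          have e' := hF.inter M hM L hL y m3 y' m3' hyy hyL hyL'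
          subst e'
          exact hSL s hs m1
      _ = _ := mul_one _
  refine ⟨A \ B, sdiff_subset, ?_, ?_⟩
  · have := le_card_sdiff B A
    omega
  · intro S' hS' hI'
    have hS'L : ∀ y ∈ S', y ∈ L := fun y hy => hA (mem_sdiff.1 (hS' hy)).1
    have d1 : ∀ s ∈ S, ∀ y ∈ S', s ≠ y := fun s hs y hy e => hSL s hs (e ▸ hS'L y hy)
    have k1 : ∀ s ∈ S, ∀ s' ∈ S, ∀ y ∈ S', s ≠ s' → ¬ T s s' y := by
      intro s hs s' hs' y hy hne ht
      have := hS' hy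
      rw [mem_sdiff] at this
      apply this.2
      rw [hB, mem_biUnion]
      exact ⟨(s, s'), mem_offDiag.2 ⟨hs, hs', hne⟩, mem_filter.2 ⟨this.1, ht⟩⟩
    have k2 : ∀ s ∈ S, ∀ y ∈ S', ∀ y' ∈ S', y ≠ y' → ¬ T s y y' := by
      intro s hs y hy y' hy' hne ht
      obtain ⟨M, hM, m1, m2, m3⟩ := hF.cov s (hS hs) y (hLU (hS'L y hy)) y' (hLU (hS'L y' hy'))
        (d1 s hs y hy) (d1 s hs y' hy') hne ht
      have e := hF.inter M hM L hL y m2 y' m3 hne (hS'L y hy) (hS'L y' hy')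
      subst e
      exact hSL s hs m1
    constructor
    · intro a ha b hb c hc hab hac hbc ht
      rcases mem_union.1 ha with ha | ha <;> rcases mem_union.1 hb with hb | hb <;>
        rcases mem_union.1 hc with hc | hc
      · exact hSI a ha b hb c hc hab hac hbc ht
      · exact k1 a ha b hb c hc hab ht
      · exact k1 a ha c hc b hb hac (h.s2 _ _ _ ht)
      · exact k2 a ha b hb c hc hbc ht
      · exact k1 b hb c hc a ha hbc (h.rot ht)
      · exact k2 b hb a ha c hc hac (h.s1 _ _ _ ht)
      · exact k2 c hc a ha b hb hab (h.rot (h.rot ht))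
      · exact hI' a ha b hb c hc hab hac hbc ht
    · exact card_union_of_disjoint (disjoint_left.2 fun s hs hs' => d1 s hs s hs' rfl)

theorem pow_aux1 {y : ℝ} (h0 : 0 ≤ y) (h1 : y ≤ 1 / 4) : 8 / 3 * y ≤ y ^ (1 / 40 : ℝ) := by
  rcases h0.eq_or_lt with rfl | hy
  · rw [mul_zero]; exact Real.rpow_nonneg le_rfl _
  have a1 : y ^ (1 / 4 : ℝ) ≤ y ^ (1 / 40 : ℝ) :=
    Real.rpow_le_rpow_of_exponent_ge hy (by linarith) (by norm_num)
  set w := y ^ (1 / 4 : ℝ) with hw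
  have hw0 : 0 ≤ w := Real.rpow_nonneg h0 _
  have hw4 : w ^ 4 = y := by
    rw [hw, ← Real.rpow_natCast, ← Real.rpow_mul h0]; norm_num
  have hwl : w ≤ 71 / 100 := by
    by_contra hcon
    push Not at hcon
    have : (71 / 100 : ℝ) ^ 4 < w ^ 4 := pow_lt_pow_left₀ hcon (by norm_num) (by norm_num)
    norm_num at this
    linarith
  have hw3 : w ^ 3 ≤ 3 / 8 := by
    have : w ^ 3 ≤ (71 / 100 : ℝ) ^ 3 := pow_le_pow_left₀ hw0 hwl 3
    norm_num at this
    linarith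
  have : 8 / 3 * y ≤ w := by
    rw [← hw4]
    nlinarith [mul_le_mul_of_nonneg_left hw3 hw0]
  linarith

theorem pow_aux2 {y : ℝ} (h0 : 0 ≤ y) (h1 : y ≤ 1 / 2) : 5 / 4 * y ≤ y ^ (1 / 40 : ℝ) := by
  rcases h0.eq_or_lt with rfl | hy
  · rw [mul_zero]; exact Real.rpow_nonneg le_rfl _
  have a1 : y ^ (1 / 2 : ℝ) ≤ y ^ (1 / 40 : ℝ) :=
    Real.rpow_le_rpow_of_exponent_ge hy (by linarith) (by norm_num)
  rw [← Real.sqrt_eq_rpow] at a1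
  have : 5 / 4 * y ≤ √y := by
    apply Real.le_sqrt_of_sq_le
    nlinarith
  linarith

theorem pow_aux3 {y : ℝ} (h0 : 0 ≤ y) (h1 : y ≤ 1) : y ≤ y ^ (1 / 40 : ℝ) := by
  rcases h0.eq_or_lt with rfl | hy
  · exact Real.rpow_nonneg le_rfl _
  · conv_lhs => rw [← Real.rpow_one y]
    exact Real.rpow_le_rpow_of_exponent_ge hy h1 (by norm_num)

/-- `x^c = z (x/n)^c`. -/
theorem pow_scale {x n : ℝ} (hx : 0 ≤ x) (hn : 0 < n) :
    x ^ (1 / 40 : ℝ) = n ^ (1 / 40 : ℝ) * (x / n) ^ (1 / 40 : ℝ) := by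
  rw [← Real.mul_rpow hn.le (div_nonneg hx hn.le), mul_div_cancel₀ _ hn.ne']

theorem step_big {V : Type} [DecidableEq V] {T : V → V → V → Prop} (h : D2T T) {U : Finset V}
    {F : Finset (Finset V)} (hF : LF T U F) {b : ℝ} (hb : 1 ≤ b)
    (IH : ∀ A, A ⊂ U → ∃ S ⊆ A, Ind T S ∧ (A.card : ℝ) ^ (1 / 40 : ℝ) ≤ S.card * b)
    (hz : 4 < (U.card : ℝ) ^ (1 / 40 : ℝ))
    (hmax : ∀ S ⊆ U, Ind T S → (S.card : ℝ) * b < (U.card : ℝ) ^ (1 / 40 : ℝ))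
    {L : Finset V} (hL : L ∈ F) (hLc : U.card < 2 * L.card) : False := by
  set n : ℝ := (U.card : ℝ) with hn
  set z : ℝ := n ^ (1 / 40 : ℝ) with hzd
  have hn0 : 0 ≤ n := Nat.cast_nonneg _
  have hz40 : z ^ 40 = n := by
    rw [hzd, ← Real.rpow_natCast, ← Real.rpow_mul hn0]; norm_num
  have hnpos : 0 < n := by rw [← hz40]; positivity
  have hLU := hF.sub L hL
  have hb0 : 0 < b := by linarith
  have hsz : ∀ S ⊆ U, Ind T S → (S.card : ℝ) < z := by
    intro S hS hI
    have := hmax S hS hI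
    have h0 : (0:ℝ) ≤ S.card := Nat.cast_nonneg _
    nlinarith
  set R := U \ L with hR
  have hRc : R.card + L.card = U.card := card_sdiff_add_card_eq_card hLU.1
  have hRc' : (R.card : ℝ) + L.card = n := by rw [hn]; exact_mod_cast hRc
  have hLc' : n < 2 * L.card := by rw [hn]; exact_mod_cast hLc
  set τ : ℝ := (R.card : ℝ) with hτ
  obtain ⟨y, hyU, hyL⟩ := exists_of_ssubset hLU
  have hτ0 : 0 ≤ τ := Nat.cast_nonneg _
  -- general consequence
  have gen : ∀ S ⊆ R, Ind T S → (S.card : ℝ) * b + (max 0 (n - τ - (S.card * S.card - S.card : ℝ))) ^ (1 / 40 : ℝ) < z := by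
    intro S hS hI
    obtain ⟨A', hA', hc, hc2⟩ := ext_line h hF (A := L) (fun s hs => (mem_sdiff.1 (hS hs)).1) hI hL
      (fun s hs => (mem_sdiff.1 (hS hs)).2) Subset.rfl
    obtain ⟨S', hS', hI', hp⟩ := IH A' (Finset.ssubset_of_subset_of_ssubset hA' hLU)
    obtain ⟨g1, g2⟩ := hc2 S' hS' hI'
    have g3 := hmax (S ∪ S') (union_subset (fun s hs => (mem_sdiff.1 (hS hs)).1)
      ((hS'.trans hA').trans hLU.1)) g1
    rw [g2] at g3
    push_cast at g3
    have g4 : (max 0 (n - τ - (S.card * S.card - S.card : ℝ))) ≤ A'.card := by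
      apply max_le (Nat.cast_nonneg _)
      have hle : S.card ≤ S.card * S.card := Nat.le_mul_self _
      have : ((L.card : ℕ) : ℝ) ≤ ((A'.card + (S.card * S.card - S.card) : ℕ) : ℝ) := by
        exact_mod_cast hc
      rw [Nat.cast_add, Nat.cast_sub hle] at this
      push_cast at this
      linarith
    have g5 := Real.rpow_le_rpow (le_max_left _ _) g4 (by norm_num : (0:ℝ) ≤ 1 / 40)
    linarith
  have lowb : ∀ x : ℝ, 0 ≤ x → x ≤ n → z * (x / n) ≤ x ^ (1 / 40 : ℝ) := by
    intro x hx hxn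
    rw [pow_scale hx hnpos]
    apply mul_le_mul_of_nonneg_left _ (by positivity)
    exact pow_aux3 (by positivity) ((div_le_one hnpos).2 hxn)
  have z39 : z / n = (z ^ 39)⁻¹ := by
    rw [← hz40]; field_simp
  rcases le_or_gt τ (z ^ 4) with hcase | hcase
  · have g := gen {y} (by simpa [hR] using ⟨hyU, hyL⟩) (by
      intro a ha b hb c hc hab
      simp only [mem_singleton] at ha hb
      exact absurd (ha.trans hb.symm) hab)
    simp only [card_singleton, Nat.cast_one, one_mul, sub_self, sub_zero] at g
    rw [max_eq_right (by linarith)] at g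
    have g2 := lowb (n - τ) (by linarith) (by linarith)
    have g3 : z * ((n - τ) / n) = z - τ * (z / n) := by field_simp
    rw [g3, z39] at g2
    have g4 : τ * (z ^ 39)⁻¹ ≤ 1 := by
      rw [← div_eq_mul_inv, div_le_one (by positivity)]
      calc τ ≤ z ^ 4 := hcase
        _ ≤ z ^ 39 := pow_le_pow_right₀ (by linarith) (by norm_num)
    linarith
  · have hRU : R ⊂ U := by
      refine sdiff_subset.ssubset_of_ne (fun e => ?_)
      have : R.card = U.card := by rw [hR, e]
      have : 0 < L.card := by
        have : (0:ℝ) < L.card := by linarith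
        exact_mod_cast this
      omega
    obtain ⟨S, hS, hI, hp⟩ := IH R hRU
    have g := gen S hS hI
    have hs := hsz S (hS.trans sdiff_subset) hI
    have hs0 : (0:ℝ) ≤ S.card := Nat.cast_nonneg _
    have hsq : (S.card * S.card - S.card : ℝ) ≤ τ / 4 := by
      have : (S.card * S.card : ℝ) ≤ z * z := by nlinarith
      have : 4 * (z * z) ≤ z ^ 4 := by
        have e1 : z ^ 4 = (z*z) * (z*z) := by ring
        have e2 : 4 ≤ z * z := by nlinarith
        rw [e1]
        exact mul_le_mul_of_nonneg_right e2 (by positivity)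
      linarith
    have hx1 : 0 ≤ n - 5 / 4 * τ := by linarith
    have g5 : (n - 5 / 4 * τ) ^ (1 / 40 : ℝ) ≤
        (max 0 (n - τ - (S.card * S.card - S.card : ℝ))) ^ (1 / 40 : ℝ) :=
      Real.rpow_le_rpow hx1 (le_trans (by linarith) (le_max_right _ _)) (by norm_num)
    have g6 := lowb _ hx1 (by linarith)
    have g7 : z * (5 / 4 * (τ / n)) ≤ τ ^ (1 / 40 : ℝ) := by
      rw [pow_scale hτ0 hnpos]
      apply mul_le_mul_of_nonneg_left _ (by positivity)
      apply pow_aux2 (by positivity)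
      rw [div_le_iff₀ hnpos]; linarith
    have g8 : z * ((n - 5 / 4 * τ) / n) = z - z * (5 / 4 * (τ / n)) := by field_simp
    linarith

theorem combine {V : Type} [DecidableEq V] {T : V → V → V → Prop} (h : D2T T) {U : Finset V}
    {F : Finset (Finset V)} (hF : LF T U F) {b : ℝ}
    (IH : ∀ A, A ⊂ U → ∃ S ⊆ A, Ind T S ∧ (A.card : ℝ) ^ (1 / 40 : ℝ) ≤ S.card * b)
    {z : ℝ} (hsz : ∀ S ⊆ U, Ind T S → (S.card : ℝ) < z)
    (G : Finset (Finset V)) (hG : G ⊆ F)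
    (hbig : ∀ L ∈ G, (G.card : ℝ) + z ^ 2 ≤ (L.card : ℝ) / 2) (G' : Finset (Finset V)) :
    G' ⊆ G → ∃ S ⊆ U, Ind T S ∧ (∀ s ∈ S, ∃ L ∈ G', s ∈ L ∧ ∀ M ∈ G, M ≠ L → s ∉ M) ∧
      ∑ L ∈ G', ((L.card : ℝ) / 2) ^ (1 / 40 : ℝ) ≤ S.card * b := by
  classical
  induction G' using Finset.induction_on with
  | empty =>
    intro _
    exact ⟨∅, empty_subset _, by intro a ha; simp at ha, by simp, by simp⟩
  | insert L G' hLG' ih =>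
    intro hsub
    have hLG : L ∈ G := hsub (mem_insert_self _ _)
    have hG'G : G' ⊆ G := fun M hM => hsub (mem_insert_of_mem hM)
    obtain ⟨S, hSU, hSI, hSl, hSs⟩ := ih hG'G
    have hLU := hF.sub L (hG hLG)
    set B := (G.erase L).biUnion (fun M => L ∩ M) with hB
    have hBc : B.card ≤ G.card := by
      calc B.card ≤ (G.erase L).card * 1 := by
            apply card_biUnion_le_card_mul
            intro M hM
            obtain ⟨hML, hMG⟩ := mem_erase.1 hM
            rw [card_le_one]
            intro x hx y hy
            by_contra hxy
            rw [mem_inter] at hx hy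
            exact hML (hF.inter L (hG hLG) M (hG hMG) x hx.1 y hy.1 hxy hx.2 hy.2).symm
        _ ≤ G.card := by rw [mul_one]; exact card_erase_le
    have hSL : ∀ s ∈ S, s ∉ L := by
      intro s hs hsL
      obtain ⟨M, hM, hsM, hM2⟩ := hSl s hs
      exact hM2 L hLG (fun e => hLG' (e ▸ hM)) hsL
    obtain ⟨A', hA', hc, hc2⟩ := ext_line h hF (A := L \ B) hSU hSI (hG hLG) hSL sdiff_subset
    have hA'L : A' ⊆ L := hA'.trans sdiff_subset
    obtain ⟨S', hS', hI', hp⟩ := IH A' (Finset.ssubset_of_subset_of_ssubset hA'L hLU)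
    obtain ⟨g1, g2⟩ := hc2 S' hS' hI'
    refine ⟨S ∪ S', union_subset hSU ((hS'.trans hA'L).trans hLU.1), g1, ?_, ?_⟩
    · intro s hs
      rcases mem_union.1 hs with hs | hs
      · obtain ⟨M, hM, hM2⟩ := hSl s hs
        exact ⟨M, mem_insert_of_mem hM, hM2⟩
      · refine ⟨L, mem_insert_self _ _, hA'L (hS' hs), ?_⟩
        intro M hM hML hsM
        have := hA' (hS' hs)
        rw [mem_sdiff] at this
        apply this.2
        rw [hB, mem_biUnion]
        exact ⟨M, mem_erase.2 ⟨hML, hM⟩, mem_inter.2 ⟨this.1, hsM⟩⟩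
    · rw [sum_insert hLG', g2]
      push_cast
      have hge : (L.card : ℝ) / 2 ≤ A'.card := by
        have e1 := le_card_sdiff B L
        have e2 : L.card ≤ A'.card + S.card * S.card + G.card := by omega
        have e3 : (L.card : ℝ) ≤ A'.card + S.card * S.card + G.card := by exact_mod_cast e2
        have e4 := hsz S hSU hSI
        have e5 : (0:ℝ) ≤ S.card := Nat.cast_nonneg _
        have e6 := hbig L hLG
        nlinarith
      have := Real.rpow_le_rpow (by positivity) hge (by norm_num : (0:ℝ) ≤ 1 / 40)
      linarith

theorem num_fin {z n s f u : ℝ} (hz : 4 < z) (hz40 : z ^ 40 = n) (hs0 : 0 ≤ s) (hs : s < z)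
    (hf0 : 0 ≤ f) (hfl : f ≤ z ^ 30) (hu : u ≤ s + s * s * f) (hn : n / 4 ≤ u) : False := by
  have hz0 : 0 < z := by linarith
  have hss : s * s ≤ z * z := mul_le_mul hs.le hs.le hs0 hz0.le
  have e1 : s * s * f ≤ (z * z) * z ^ 30 := mul_le_mul hss hfl hf0 (mul_nonneg hz0.le hz0.le)
  have e2 : (z * z) * z ^ 30 = z ^ 32 := by ring
  have e3 : z ≤ z ^ 32 := le_self_pow₀ (by linarith) (by norm_num)
  have e8 : (65536 : ℝ) ≤ z ^ 8 := by
    have := pow_le_pow_left₀ (by norm_num : (0:ℝ) ≤ 4) hz.le 8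
    have k : (4:ℝ) ^ 8 = 65536 := by norm_num
    linarith
  have e6 : 0 < z ^ 32 := pow_pos hz0 32
  have e4 : 65536 * z ^ 32 ≤ z ^ 8 * z ^ 32 := mul_le_mul_of_nonneg_right e8 e6.le
  have e5 : z ^ 8 * z ^ 32 = n := by rw [← hz40]; ring
  linarith

set_option maxHeartbeats 1000000 in
theorem step_small {V : Type} [DecidableEq V] {T : V → V → V → Prop} (h : D2T T) {U : Finset V}
    {F : Finset (Finset V)} (hF : LF T U F) {b : ℝ} (hb : 1 ≤ b)
    (IH : ∀ A, A ⊂ U → ∃ S ⊆ A, Ind T S ∧ (A.card : ℝ) ^ (1 / 40 : ℝ) ≤ S.card * b)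
    (hz : 4 < (U.card : ℝ) ^ (1 / 40 : ℝ))
    (hmax : ∀ S ⊆ U, Ind T S → (S.card : ℝ) * b < (U.card : ℝ) ^ (1 / 40 : ℝ))
    (hLc : ∀ L ∈ F, 2 * L.card ≤ U.card) : False := by
  classical
  set n : ℝ := (U.card : ℝ) with hn
  set z : ℝ := n ^ (1 / 40 : ℝ) with hzd
  have hn0 : 0 ≤ n := Nat.cast_nonneg _
  have hz40 : z ^ 40 = n := by
    rw [hzd, ← Real.rpow_natCast, ← Real.rpow_mul hn0]; norm_num
  have hnpos : 0 < n := by rw [← hz40]; positivity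
  have hz0 : 0 < z := by linarith
  have hsz : ∀ S ⊆ U, Ind T S → (S.card : ℝ) < z := by
    intro S hS hI
    have := hmax S hS hI
    have h0 : (0:ℝ) ≤ S.card := Nat.cast_nonneg _
    nlinarith
  set G := F.filter (fun L => z ^ 30 ≤ (L.card : ℝ)) with hG
  have hGF : G ⊆ F := filter_subset _ _
  have hGbig : ∀ L ∈ G, z ^ 30 ≤ (L.card : ℝ) := fun L hL => (mem_filter.1 hL).2
  have z10 : 16 ≤ z ^ 10 := by
    have : (4:ℝ) ^ 10 ≤ z ^ 10 := pow_le_pow_left₀ (by norm_num) hz.le 10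
    norm_num at this; linarith
  have z30 : 16 ≤ z ^ 30 := by
    have : (4:ℝ) ^ 30 ≤ z ^ 30 := pow_le_pow_left₀ (by norm_num) hz.le 30
    norm_num at this; linarith
  have hGc : (G.card : ℝ) ≤ 2 * z ^ 20 := by
    have e1 : ∑ L ∈ G, L.offDiag.card ≤ U.offDiag.card := by
      rw [← card_biUnion]
      · apply card_le_card
        intro p hp
        obtain ⟨L, hL, hpL⟩ := mem_biUnion.1 hp
        exact offDiag_mono (hF.sub L (hGF hL)).1 hpL
      · intro L hL M hM hLM
        rw [Function.onFun, disjoint_left]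
        intro p hp hp'
        rw [mem_offDiag] at hp hp'
        exact hLM (hF.inter L (hGF hL) M (hGF hM) p.1 hp.1 p.2 hp.2.1 hp.2.2 hp'.1 hp'.2.1)
    have e2 : ((∑ L ∈ G, L.offDiag.card : ℕ) : ℝ) ≤ n ^ 2 := by
      have : U.offDiag.card ≤ U.card ^ 2 := by rw [offDiag_card, sq]; omega
      rw [hn]; exact_mod_cast e1.trans this
    have e3 : (G.card : ℝ) * (z ^ 60 / 2) ≤ n ^ 2 := by
      refine le_trans ?_ e2
      rw [Nat.cast_sum, ← nsmul_eq_mul]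
      apply card_nsmul_le_sum
      intro L hL
      have k := hGbig L hL
      rw [offDiag_card, Nat.cast_sub (Nat.le_mul_self _)]
      push_cast
      have e60 : z ^ 60 = z ^ 30 * z ^ 30 := by ring
      rw [e60]
      nlinarith
    rw [← hz40] at e3
    have e4 : (z ^ 40) ^ 2 = (2 * z ^ 20) * (z ^ 60 / 2) := by ring
    rw [e4] at e3
    exact le_of_mul_le_mul_right e3 (by positivity)
  have hbig : ∀ L ∈ G, (G.card : ℝ) + z ^ 2 ≤ (L.card : ℝ) / 2 := by
    intro L hL
    have k := hGbig L hL
    have e1 : z ^ 2 ≤ z ^ 20 := pow_le_pow_right₀ (by linarith) (by norm_num)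
    have e2 : z ^ 30 = z ^ 10 * z ^ 20 := by ring
    have e3 : 16 * z ^ 20 ≤ z ^ 10 * z ^ 20 := mul_le_mul_of_nonneg_right z10 (by positivity)
    have e4 : 0 < z ^ 20 := by positivity
    linarith
  obtain ⟨S0, hS0, hI0, -, hsum⟩ := combine h hF IH hsz G hGF hbig G Subset.rfl
  have hsum2 := lt_of_le_of_lt hsum (hmax S0 hS0 hI0)
  have hsum3 : ∑ L ∈ G, (L.card : ℝ) ≤ 3 / 4 * n := by
    have e1 : ∀ L ∈ G, z * (4 / 3 * (L.card / n)) ≤ ((L.card : ℝ) / 2) ^ (1 / 40 : ℝ) := by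
      intro L hL
      rw [pow_scale (by positivity) hnpos]
      apply mul_le_mul_of_nonneg_left _ hz0.le
      have hl : 2 * (L.card : ℝ) ≤ n := by rw [hn]; exact_mod_cast hLc L (hGF hL)
      have := pow_aux1 (y := (L.card : ℝ) / 2 / n) (by positivity)
        (by rw [div_le_iff₀ hnpos]; linarith)
      refine le_trans (le_of_eq ?_) this
      ring
    have e2 := (sum_le_sum e1).trans_lt hsum2
    rw [← mul_sum, ← mul_sum, ← sum_div] at e2
    have e3 : 4 / 3 * ((∑ L ∈ G, (L.card : ℝ)) / n) < 1 := by
      by_contra hcon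
      push Not at hcon
      nlinarith
    have e4 : (∑ L ∈ G, (L.card : ℝ)) / n ≤ 3 / 4 := by linarith
    rwa [div_le_iff₀ hnpos] at e4
  set U' := U \ G.biUnion id with hU'
  have hU'c : n / 4 ≤ U'.card := by
    have e1 : U.card - (G.biUnion id).card ≤ U'.card := le_card_sdiff (G.biUnion id) U
    have e2 : (G.biUnion id).card ≤ ∑ L ∈ G, L.card := card_biUnion_le
    have e3 : U.card ≤ U'.card + ∑ L ∈ G, L.card := by omega
    have e4 : n ≤ U'.card + ∑ L ∈ G, (L.card : ℝ) := by rw [hn]; exact_mod_cast e3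
    linarith
  obtain ⟨S, hSm, hSmax⟩ := exists_max_image (U'.powerset.filter (fun S => Ind T S)) Finset.card
    ⟨∅, mem_filter.2 ⟨empty_mem_powerset _, fun a ha => absurd ha (notMem_empty a)⟩⟩
  obtain ⟨hSU', hSI⟩ := mem_filter.1 hSm
  rw [mem_powerset] at hSU'
  have hSU : S ⊆ U := hSU'.trans sdiff_subset
  have hcov : U' ⊆ S ∪ S.offDiag.biUnion (fun p => U'.filter (fun y => y ∉ S ∧ T p.1 p.2 y)) := by
    intro y hy
    by_cases hyS : y ∈ S
    · exact mem_union_left _ hyS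
    apply mem_union_right
    by_contra hno
    have hno2 : ∀ s ∈ S, ∀ s' ∈ S, s ≠ s' → ¬ T s s' y := by
      intro s hs s' hs' hne ht
      apply hno
      exact mem_biUnion.2 ⟨(s, s'), mem_offDiag.2 ⟨hs, hs', hne⟩, mem_filter.2 ⟨hy, hyS, ht⟩⟩
    have hI : Ind T (insert y S) := by
      intro a ha b hb c hc hab hac hbc ht
      rcases mem_insert.1 ha with ea | ha2
      · subst ea
        exact hno2 b (mem_of_mem_insert_of_ne hb hab.symm) c
          (mem_of_mem_insert_of_ne hc hac.symm) hbc (h.rot ht)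
      rcases mem_insert.1 hb with eb | hb2
      · subst eb
        exact hno2 a ha2 c (mem_of_mem_insert_of_ne hc hbc.symm) hac (h.s2 _ _ _ ht)
      rcases mem_insert.1 hc with ec | hc2
      · subst ec
        exact hno2 a ha2 b hb2 hab ht
      exact hSI a ha2 b hb2 c hc2 hab hac hbc ht
    have := hSmax (insert y S) (mem_filter.2 ⟨mem_powerset.2 (insert_subset hy hSU'), hI⟩)
    rw [card_insert_of_notMem hyS] at this
    omega
  have hN : ∀ p ∈ S.offDiag, (U'.filter (fun y => y ∉ S ∧ T p.1 p.2 y)).card ≤ ⌊z ^ 30⌋₊ := by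
    rintro ⟨s, s'⟩ hp
    obtain ⟨hs, hs', hne⟩ := mem_offDiag.1 hp
    simp only at hs hs' hne
    rcases (U'.filter (fun y => y ∉ S ∧ T s s' y)).eq_empty_or_nonempty with he | ⟨y, hy⟩
    · simp [he]
    simp only [mem_filter] at hy
    have getL : ∀ y, y ∈ U' ∧ y ∉ S ∧ T s s' y → ∃ L ∈ F, s ∈ L ∧ s' ∈ L ∧ y ∈ L := by
      intro y hy
      exact hF.cov s (hSU hs) s' (hSU hs') y (mem_sdiff.1 hy.1).1 hne
        (fun e => hy.2.1 (e ▸ hs)) (fun e => hy.2.1 (e ▸ hs')) hy.2.2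
    obtain ⟨L, hL, l1, l2, l3⟩ := getL y hy
    have hLG : L ∉ G := by
      intro hLG
      exact (mem_sdiff.1 hy.1).2 (mem_biUnion.2 ⟨L, hLG, l3⟩)
    have hLs : (L.card : ℝ) ≤ z ^ 30 := by
      by_contra hcon
      push Not at hcon
      exact hLG (mem_filter.2 ⟨hL, hcon.le⟩)
    have hLf : L.card ≤ ⌊z ^ 30⌋₊ := Nat.le_floor hLs
    refine le_trans (card_le_card ?_) hLf
    intro y' hy'
    simp only [mem_filter] at hy'
    obtain ⟨M, hM, m1, m2, m3⟩ := getL y' hy'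
    rw [hF.inter L hL M hM s l1 s' l2 hne m1 m2]
    exact m3
  have hfin : U'.card ≤ S.card + S.card * S.card * ⌊z ^ 30⌋₊ := by
    refine (card_le_card hcov).trans ((card_union_le _ _).trans ?_)
    apply Nat.add_le_add_left
    refine (card_biUnion_le_card_mul _ _ _ hN).trans ?_
    apply Nat.mul_le_mul_right
    rw [offDiag_card]; omega
  have hfin2 : (U'.card : ℝ) ≤ S.card + S.card * S.card * (⌊z ^ 30⌋₊ : ℝ) := by exact_mod_cast hfin
  have hfl : (⌊z ^ 30⌋₊ : ℝ) ≤ z ^ 30 := Nat.floor_le (pow_nonneg hz0.le 30)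
  exact num_fin hz hz40 (Nat.cast_nonneg _) (hsz S hSU hSI) (Nat.cast_nonneg _) hfl hfin2 hU'c

theorem main_step {V : Type} [DecidableEq V] {T : V → V → V → Prop} (h : D2T T) {U : Finset V}
    {F : Finset (Finset V)} (hF : LF T U F) {b : ℝ} (hb : 1 ≤ b)
    (IH : ∀ A, A ⊂ U → ∃ S ⊆ A, Ind T S ∧ (A.card : ℝ) ^ (1 / 40 : ℝ) ≤ S.card * b)
    (hz : 4 < (U.card : ℝ) ^ (1 / 40 : ℝ)) :
    ∃ S ⊆ U, Ind T S ∧ (U.card : ℝ) ^ (1 / 40 : ℝ) ≤ S.card * b := by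
  by_contra hcon
  push Not at hcon
  by_cases hL : ∃ L ∈ F, U.card < 2 * L.card
  · obtain ⟨L, hL, hLc⟩ := hL
    exact step_big h hF hb IH hz hcon hL hLc
  · push Not at hL
    exact step_small h hF hb IH hz hcon hL

theorem ind_of_card_le {V : Type} {T : V → V → V → Prop} {S : Finset V} (hS : S.card ≤ 2) :
    Ind T S := by
  classical
  intro a ha b hb c hc hab hac hbc _
  have : ({a, b, c} : Finset V).card ≤ S.card := by
    apply card_le_card
    intro x hx
    simp only [mem_insert, mem_singleton] at hx
    rcases hx with rfl | rfl | rfl <;> assumption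
  rw [card_eq_three.2 ⟨a, b, c, hab, hac, hbc, rfl⟩] at this
  omega

theorem aux_side {V : Type} [DecidableEq V] {T T' : V → V → V → Prop} (h : D2T T) {U : Finset V}
    {F : Finset (Finset V)} (hF : LF T U F) (hU : 1 ≤ U.card)
    (IH : ∀ A, A ⊂ U → ∃ S ⊆ A, ∃ S' ⊆ A, Ind T S ∧ Ind T' S' ∧
      (A.card : ℝ) ^ (1 / 40 : ℝ) ≤ S.card * S'.card)
    (hz : 4 < (U.card : ℝ) ^ (1 / 40 : ℝ)) :
    ∃ S ⊆ U, ∃ S' ⊆ U, Ind T S ∧ Ind T' S' ∧ (U.card : ℝ) ^ (1 / 40 : ℝ) ≤ S.card * S'.card := by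
  classical
  obtain ⟨S', hSm, hSmax⟩ := exists_max_image (U.powerset.filter (fun S => Ind T' S)) Finset.card
    ⟨∅, mem_filter.2 ⟨empty_mem_powerset _, fun a ha => absurd ha (notMem_empty a)⟩⟩
  obtain ⟨hSU, hSI⟩ := mem_filter.1 hSm
  rw [mem_powerset] at hSU
  have hb : (1:ℝ) ≤ S'.card := by
    obtain ⟨v, hv⟩ := card_pos.1 hU
    have := hSmax {v} (mem_filter.2 ⟨mem_powerset.2 (by simpa using hv), ind_of_card_le (by simp)⟩)
    rw [card_singleton] at this
    exact_mod_cast this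
  obtain ⟨S, hS, hI, hp⟩ := main_step h hF hb (fun A hA => by
    obtain ⟨S, hS, S1, hS1, hI, hI1, hp⟩ := IH A hA
    refine ⟨S, hS, hI, hp.trans ?_⟩
    apply mul_le_mul_of_nonneg_left _ (Nat.cast_nonneg _)
    exact_mod_cast hSmax S1 (mem_filter.2 ⟨mem_powerset.2 (hS1.trans hA.1), hI1⟩)) hz
  exact ⟨S, hS, S', hSU, hI, hSI, hp⟩

theorem main_ind {V : Type} [DecidableEq V] {T : V → V → V → Prop} (h : D2T T) (U : Finset V) :
    ∃ S ⊆ U, ∃ S' ⊆ U, Ind T S ∧ Ind (fun a b c => ¬ T a b c) S' ∧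
      (U.card : ℝ) ^ (1 / 40 : ℝ) ≤ S.card * S'.card := by
  induction U using Finset.strongInduction with
  | H U IH =>
  rcases le_or_gt ((U.card : ℝ) ^ (1 / 40 : ℝ)) 4 with hz | hz
  · by_cases h2 : 2 ≤ U.card
    · obtain ⟨S, hS, hc⟩ := exists_subset_card_eq h2
      refine ⟨S, hS, S, hS, ind_of_card_le hc.le, ind_of_card_le hc.le, ?_⟩
      rw [hc]; norm_num; norm_num at hz; exact hz
    · refine ⟨U, Subset.rfl, U, Subset.rfl, ind_of_card_le (by omega), ind_of_card_le (by omega), ?_⟩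
      have : U.card = 0 ∨ U.card = 1 := by omega
      rcases this with e | e <;> rw [e] <;> norm_num
  · have h3 : 3 ≤ U.card := by
      by_contra hcon
      have h2 : (U.card : ℝ) ≤ 4 := by
        have : U.card ≤ 4 := by omega
        exact_mod_cast this
      have : (U.card : ℝ) ^ (1 / 40 : ℝ) ≤ 4 ^ (1 / 40 : ℝ) :=
        Real.rpow_le_rpow (Nat.cast_nonneg _) h2 (by norm_num)
      have : (4 : ℝ) ^ (1 / 40 : ℝ) ≤ 4 ^ (1 : ℝ) :=
        Real.rpow_le_rpow_of_exponent_le (by norm_num) (by norm_num)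
      rw [Real.rpow_one] at this
      linarith
    rcases LF_exists h h3 with ⟨F, hF⟩ | ⟨F, hF⟩
    · exact aux_side h hF (by omega) IH hz
    · obtain ⟨S', hS', S, hS, hI', hI, hp⟩ := aux_side (T' := T) h.compl hF (by omega) (fun A hA => by
        obtain ⟨S, hS, S1, hS1, hI, hI1, hp⟩ := IH A hA
        exact ⟨S1, hS1, S, hS, hI1, hI, by rw [mul_comm]; exact hp⟩) hz
      exact ⟨S, hS, S', hS', hI, hI', by rw [mul_comm]; exact hp⟩

theorem D2T_of_free {V : Type} [Fintype V] [DecidableEq V] (E : Finset (Finset V))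
    (h3 : ∀ e ∈ E, e.card = 3) (hE : InducedD2Free E) :
    D2T (fun a b c : V => ({a, b, c} : Finset V) ∈ E) where
  s1 := by
    intro a b c h
    rwa [insert_comm]
  s2 := by
    intro a b c h
    rwa [pair_comm c b]
  q := by
    intro a b c d ab ac ad bc bd cd h1 h2
    by_contra hcon
    push Not at hcon
    obtain ⟨n1, n2⟩ := hcon
    apply hE {a, b, c, d} (by simp [*])
    have : E.filter (fun e => e ⊆ {a, b, c, d}) = {{a, b, c}, {a, b, d}} := by
      ext e
      simp only [mem_filter, mem_insert, mem_singleton]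
      constructor
      · rintro ⟨he, hs⟩
        have hc := h3 e he
        have h4 : ({a, b, c, d} : Finset V).card = 4 := by simp [*]
        have hd : (({a, b, c, d} : Finset V) \ e).card = 1 := by
          rw [card_sdiff_of_subset hs]; omega
        obtain ⟨x, hx⟩ := card_eq_one.1 hd
        have he2 : e = ({a, b, c, d} : Finset V).erase x := by
          rw [← sdiff_singleton_eq_erase, ← hx, Finset.sdiff_sdiff_eq_self hs]
        have hxm : x ∈ ({a, b, c, d} : Finset V) := by
          have : x ∈ ({a, b, c, d} : Finset V) \ e := by rw [hx]; simp
          exact (mem_sdiff.1 this).1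
        simp only [mem_insert, mem_singleton] at hxm
        rcases hxm with rfl | rfl | rfl | rfl
        · exfalso; apply n2; convert he; rw [he2]; ext y; simp; grind
        · exfalso; apply n1; convert he; rw [he2]; ext y; simp; grind
        · right; rw [he2]; ext y; simp; grind
        · left; rw [he2]; ext y; simp; grind
      · rintro (rfl | rfl)
        · refine ⟨h1, ?_⟩
          intro y; simp; grind
        · refine ⟨h2, ?_⟩
          intro y; simp; grind
    rw [this, card_pair]
    intro e
    have : c ∈ ({a, b, d} : Finset V) := by rw [← e]; simp
    simp at this
    grind

/-- Polynomial Erdős–Hajnal theorem for induced `D₂`-free 3-uniform hypergraphs. -/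
theorem EH_for_D2_free :
    ∃ c : ℝ, c > 0 ∧ ∀ (V : Type) [Fintype V] [DecidableEq V] (E : Finset (Finset V)),
      (∀ e ∈ E, e.card = 3) →
      InducedD2Free E →
      ∃ S : Finset V, (S.card : ℝ) ≥ (Fintype.card V : ℝ) ^ c ∧
        (IsHClique E S ∨ IsHIndep E S) := by
  refine ⟨1 / 80, by norm_num, ?_⟩
  intro V _ _ E h3 hE
  obtain ⟨S, -, S', -, hI, hI', hp⟩ := main_ind (D2T_of_free E h3 hE) (univ : Finset V)
  rw [card_univ] at hp
  set n : ℝ := (Fintype.card V : ℝ) with hn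
  have hn0 : 0 ≤ n := Nat.cast_nonneg _
  have e : n ^ (1 / 40 : ℝ) = n ^ (1 / 80 : ℝ) * n ^ (1 / 80 : ℝ) := by
    rw [← sq, ← Real.rpow_natCast, ← Real.rpow_mul hn0]; norm_num
  rw [e] at hp
  have hw : 0 ≤ n ^ (1 / 80 : ℝ) := Real.rpow_nonneg hn0 _
  have hs0 : (0:ℝ) ≤ S.card := Nat.cast_nonneg _
  have hs0' : (0:ℝ) ≤ S'.card := Nat.cast_nonneg _
  rcases le_or_gt (n ^ (1 / 80 : ℝ)) S.card with k | k
  · refine ⟨S, k, Or.inr ?_⟩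
    intro t ht hc
    obtain ⟨a, b, c, hab, hac, hbc, rfl⟩ := card_eq_three.1 hc
    exact hI a (ht (by simp)) b (ht (by simp)) c (ht (by simp)) hab hac hbc
  · refine ⟨S', ?_, Or.inl ?_⟩
    · by_contra hcon
      push Not at hcon
      nlinarith
    intro t ht hc
    obtain ⟨a, b, c, hab, hac, hbc, rfl⟩ := card_eq_three.1 hc
    exact not_not.1 (hI' a (ht (by simp)) b (ht (by simp)) c (ht (by simp)) hab hac hbc)
end

section
/- Let G be a graph, let k ≥ 3, and let H be the k-uniform hypergraph on V(G) whose edges are exactly the k-element subsets of V(G) that induce a clique in G. If F is a k-uniform hypergraph on k+1 vertices and some k+1 vertices of H induce a copy of F (i.e., span exactly the edge set of F), then the number of edges of F is 0, 1, 2, or k+1. -/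
open Finset

/-- If `H` is the `k`-uniform hypergraph of `k`-cliques of a graph `G`, and some `k+1`
vertices of `H` induce a copy of a `k`-uniform hypergraph `F` on `k+1` vertices, then
`F` has `0`, `1`, `2` or `k+1` edges. -/
theorem cliques_hypergraph_induced_counts
    {V : Type} [DecidableEq V] (G : SimpleGraph V) (k : ℕ) (hk : 3 ≤ k)
    (W : Type) [Fintype W] [DecidableEq W] (F : Finset (Finset W))
    (hF : ∀ e ∈ F, e.card = k)
    (hW : Fintype.card W = k + 1)
    (hcopy : ∃ f : W ↪ V, ∀ t : Finset W, t.card = k →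
      (t ∈ F ↔ G.IsClique (↑(t.map f) : Set V))) :
    F.card = 0 ∨ F.card = 1 ∨ F.card = 2 ∨ F.card = k + 1 := by
  obtain ⟨f, hf⟩ := hcopy
  by_cases h : ∀ a b : W, a ≠ b → G.Adj (f a) (f b)
  · right; right; right
    have hE : F = powersetCard k univ := by
      ext t
      rw [mem_powersetCard]
      constructor
      · intro ht
        exact ⟨subset_univ _, hF t ht⟩
      · rintro ⟨-, ht⟩
        rw [hf t ht]
        intro x hx y hy hxy
        simp only [coe_map, Set.mem_image] at hx hy
        obtain ⟨a, -, rfl⟩ := hx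
        obtain ⟨b, -, rfl⟩ := hy
        exact h a b (fun hab => hxy (by rw [hab]))
    rw [hE, card_powersetCard, card_univ, hW, Nat.choose_succ_self_right]
  · push Not at h
    obtain ⟨a, b, hab, hn⟩ := h
    have key : ∀ (t : Finset W) (c : W), t.card = k → c ∉ t → t = univ.erase c := by
      intro t c ht hc
      apply eq_of_subset_of_card_le
      · intro x hx
        rw [mem_erase]
        exact ⟨fun hxc => hc (hxc ▸ hx), mem_univ _⟩
      · rw [card_erase_of_mem (mem_univ _), card_univ, hW, ht]
        simp
    have hsub : F ⊆ {univ.erase a, univ.erase b} := by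
      intro t ht
      rw [mem_insert, mem_singleton]
      have hc := (hf t (hF t ht)).1 ht
      by_cases ha : a ∈ t
      · by_cases hb : b ∈ t
        · exact absurd (hc (by simpa using ha) (by simpa using hb)
            (fun e => hab (f.injective e))) hn
        · exact Or.inr (key t b (hF t ht) hb)
      · exact Or.inl (key t a (hF t ht) ha)
    have h2 := (card_le_card hsub).trans card_le_two
    omega
end

section
/- If a 3-uniform hypergraph H is induced D₂-free, then for every vertex v of H the link graph L(v) is a cograph, i.e., L(v) contains no induced path on 4 vertices. -/
open Finset

lemma four_aux {V : Type} [Fintype V] [DecidableEq V]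
    (E : Finset (Finset V)) (hE : ∀ e ∈ E, e.card = 3) (hfree : InducedD2Free E)
    (w x y z : V) (h1 : w ≠ x) (h2 : w ≠ y) (h3 : w ≠ z) (h4 : x ≠ y) (h5 : x ≠ z) (h6 : y ≠ z)
    (hA : ({w, x, y} : Finset V) ∈ E) (hB : ({x, y, z} : Finset V) ∈ E)
    (hC : ({w, x, z} : Finset V) ∉ E) (hD : ({w, y, z} : Finset V) ∉ E) : False := by
  have hS : ({w, x, y, z} : Finset V).card = 4 := by
    simp [h1, h2, h3, h4, h5, h6]
  apply hfree {w, x, y, z} hS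
  have hne : ({w, x, y} : Finset V) ≠ {x, y, z} := by
    intro h
    have : w ∈ ({x, y, z} : Finset V) := by rw [← h]; simp
    simp [h1, h2, h3] at this
  rw [← Finset.card_pair hne]
  congr 1
  ext e
  simp only [Finset.mem_filter, Finset.mem_insert, Finset.mem_singleton]
  constructor
  · rintro ⟨he, hs⟩
    have hc : (({w, x, y, z} : Finset V) \ e).card = 1 := by
      rw [Finset.card_sdiff_of_subset hs, hS, hE e he]
    obtain ⟨u, hu⟩ := Finset.card_eq_one.1 hc
    have he' : e = ({w, x, y, z} : Finset V) \ {u} := by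
      rw [← hu, Finset.sdiff_sdiff_eq_self hs]
    have hu' : u ∈ ({w, x, y, z} : Finset V) := by
      have : u ∈ ({w, x, y, z} : Finset V) \ e := by rw [hu]; simp
      exact (Finset.mem_sdiff.1 this).1
    simp only [Finset.mem_insert, Finset.mem_singleton] at hu'
    rcases hu' with rfl | rfl | rfl | rfl
    · right; rw [he']; ext t; simp; grind
    · exact absurd (by convert he using 1; rw [he']; ext t; simp; grind) hD
    · exact absurd (by convert he using 1; rw [he']; ext t; simp; grind) hC
    · left; rw [he']; ext t; simp; grind
  · rintro (rfl | rfl)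
    · exact ⟨hA, by intro t; simp; tauto⟩
    · exact ⟨hB, by intro t; simp; tauto⟩

/-- If a 3-uniform hypergraph is induced `D₂`-free, then the link graph of every vertex `v`
(the graph on `V \ {v}` with edges `{x,y}` such that `{v,x,y}` is a hyperedge) contains no
induced path on 4 vertices, i.e. it is a cograph. -/
theorem link_graphs_are_cographs {V : Type} [Fintype V] [DecidableEq V]
    (E : Finset (Finset V)) (hE : ∀ e ∈ E, e.card = 3)
    (hfree : InducedD2Free E) (v : V) :
    ¬ ∃ a b c d : V, a ≠ v ∧ b ≠ v ∧ c ≠ v ∧ d ≠ v ∧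
      a ≠ b ∧ a ≠ c ∧ a ≠ d ∧ b ≠ c ∧ b ≠ d ∧ c ≠ d ∧
      ({v, a, b} : Finset V) ∈ E ∧ ({v, b, c} : Finset V) ∈ E ∧
      ({v, c, d} : Finset V) ∈ E ∧
      ({v, a, c} : Finset V) ∉ E ∧ ({v, a, d} : Finset V) ∉ E ∧
      ({v, b, d} : Finset V) ∉ E := by
  rintro ⟨a, b, c, d, av, bv, cv, dv, ab, ac, ad, bc, bd, cd, e1, e2, e3, n1, n2, n3⟩
  have r (x y z : V) : ({x, y, z} : Finset V) = {y, x, z} := Finset.insert_comm _ _ _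
  have q (x y z : V) : ({x, y, z} : Finset V) = {x, z, y} := by rw [Finset.pair_comm]
  have m1 : ({a, b, c} : Finset V) ∈ E := by
    by_contra h
    exact four_aux E hE hfree a v b c av ab ac bv.symm cv.symm bc
      (by rwa [r]) e2 (by rwa [r]) h
  have m2 : ({b, c, d} : Finset V) ∈ E := by
    by_contra h
    exact four_aux E hE hfree b v c d bv bc bd cv.symm dv.symm cd
      (by rwa [r]) e3 (by rwa [r]) h
  have m3 : ({a, b, d} : Finset V) ∉ E := by
    intro h
    exact four_aux E hE hfree v a b d av.symm bv.symm dv.symm ab ad bd e1 h n2 n3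
  have m4 : ({a, c, d} : Finset V) ∉ E := by
    intro h
    exact four_aux E hE hfree v d c a dv.symm cv.symm av.symm cd.symm ad.symm ac.symm
      (by rwa [q]) (by rwa [q d, r d, q a d] ) (by rwa [q]) (by rwa [q])
  exact four_aux E hE hfree a b c d ab ac ad bc bd cd m1 m2 m3 m4
end

section
/- Let ε > 0, let H be a 3-uniform hypergraph, and let X, Y, Z be pairwise disjoint subsets of V(H) with |X| ≥ 2/ε. If d(X,X,Y) ≥ 1 − ε²/8 and d(X,X,Z) ≥ 1 − ε²/8, then either d(X,Y,Z) ≥ 1 − ε, or H contains at least (ε²/16)·|X|²·|Y|·|Z| induced copies of D₂. -/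
open Finset

/-- The number of induced copies of `D₂` (4 vertices spanning exactly 2 edges). -/
def inducedD2Count {V : Type} [Fintype V] [DecidableEq V] (E : Finset (Finset V)) : ℕ :=
  (((Finset.univ : Finset V).powersetCard 4).filter
    (fun S => (E.filter (fun e => e ⊆ S)).card = 2)).card

/-- `e(X,Y,Z)`: the number of edges with one vertex in each of `X`, `Y`, `Z`. -/
def eXYZ {V : Type} [DecidableEq V] (E : Finset (Finset V)) (X Y Z : Finset V) : ℕ :=
  (E.filter (fun e => (e ∩ X).card = 1 ∧ (e ∩ Y).card = 1 ∧ (e ∩ Z).card = 1)).card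

/-- `d(X,Y,Z) = e(X,Y,Z) / (|X||Y||Z|)`. -/
noncomputable def dXYZ {V : Type} [DecidableEq V] (E : Finset (Finset V))
    (X Y Z : Finset V) : ℝ :=
  (eXYZ E X Y Z : ℝ) / ((X.card : ℝ) * (Y.card : ℝ) * (Z.card : ℝ))

/-- `e(X,X,Y)`: the number of edges with two vertices in `X` and one vertex in `Y`. -/
def eXXY {V : Type} [DecidableEq V] (E : Finset (Finset V)) (X Y : Finset V) : ℕ :=
  (E.filter (fun e => (e ∩ X).card = 2 ∧ (e ∩ Y).card = 1)).card

/-- `d(X,X,Y) = e(X,X,Y) / (C(|X|,2)·|Y|)`. -/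
noncomputable def dXXY {V : Type} [DecidableEq V] (E : Finset (Finset V))
    (X Y : Finset V) : ℝ :=
  (eXXY E X Y : ℝ) / ((X.card.choose 2 : ℝ) * (Y.card : ℝ))


lemma aux_d2 {V : Type} [DecidableEq V]
    (E : Finset (Finset V)) (hE : ∀ e ∈ E, e.card = 3) (a b y z : V)
    (hab : a ≠ b) (hay : a ≠ y) (hby : b ≠ y) (haz : a ≠ z) (hbz : b ≠ z) (hyz : y ≠ z)
    (h1 : insert y {a, b} ∈ E) (h2 : insert z {a, b} ∈ E)
    (h3 : {a, y, z} ∉ E) (h4 : {b, y, z} ∉ E) :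
    (E.filter (fun e => e ⊆ insert y (insert z {a, b}))).card = 2 := by
  have hS : (insert y (insert z {a, b}) : Finset V).card = 4 := by
    rw [card_insert_of_notMem, card_insert_of_notMem, card_pair hab] <;> simp <;> tauto
  have : E.filter (fun e => e ⊆ insert y (insert z {a, b})) =
      {insert y {a, b}, insert z {a, b}} := by
    ext e
    simp only [mem_filter, mem_insert, mem_singleton]
    constructor
    · rintro ⟨he, hs⟩
      have hc := hE e he
      have : (insert y (insert z {a, b}) \ e).card = 1 := by
        rw [card_sdiff_of_subset hs, hS, hc]
      obtain ⟨v, hv⟩ := card_eq_one.mp this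
      have hev : e = (insert y (insert z {a, b})) \ {v} := by
        rw [← hv, Finset.sdiff_sdiff_eq_self hs]
      have hvS : v ∈ (insert y (insert z {a, b}) : Finset V) := by
        have : v ∈ (insert y (insert z {a, b}) : Finset V) \ e := by rw [hv]; simp
        exact (mem_sdiff.mp this).1
      simp only [mem_insert, mem_singleton] at hvS
      rcases hvS with rfl | rfl | rfl | rfl
      · right; rw [hev]; ext t; simp only [mem_sdiff, mem_insert, mem_singleton]; grind
      · left; rw [hev]; ext t; simp only [mem_sdiff, mem_insert, mem_singleton]; grind
      · exfalso; apply h4; convert he using 1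
        rw [hev]; ext t; simp only [mem_sdiff, mem_insert, mem_singleton]; grind
      · exfalso; apply h3; convert he using 1
        rw [hev]; ext t; simp only [mem_sdiff, mem_insert, mem_singleton]; grind
    · rintro (rfl | rfl)
      · exact ⟨h1, by intro t; simp only [mem_insert, mem_singleton]; tauto⟩
      · exact ⟨h2, by intro t; simp only [mem_insert, mem_singleton]; tauto⟩
  rw [this, card_pair]
  intro h
  have : y ∈ insert z ({a, b} : Finset V) := by rw [← h]; simp
  simp only [mem_insert, mem_singleton] at this
  grind

lemma aux_inter {V : Type} [DecidableEq V] {X Y Z p : Finset V} {y z : V}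
    (hXY : Disjoint X Y) (hXZ : Disjoint X Z) (hYZ : Disjoint Y Z)
    (hp : p ⊆ X) (hy : y ∈ Y) (hz : z ∈ Z) :
    insert y (insert z p) ∩ X = p ∧ insert y (insert z p) ∩ Y = {y} ∧
    insert y (insert z p) ∩ Z = {z} := by
  rw [Finset.disjoint_left] at hXY hXZ hYZ
  refine ⟨?_, ?_, ?_⟩ <;> ext t <;> simp only [mem_inter, mem_insert, mem_singleton] <;>
    have := @hp t <;> grind

lemma aux_xxy {V : Type} [DecidableEq V]
    (E : Finset (Finset V)) (hE : ∀ e ∈ E, e.card = 3) (X Y : Finset V)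
    (hXY : Disjoint X Y) :
    eXXY E X Y ≤ ((X.powersetCard 2 ×ˢ Y).filter (fun q => insert q.2 q.1 ∈ E)).card := by
  unfold eXXY
  apply card_le_card_of_surjOn (fun q => insert q.2 q.1)
  intro e he
  simp only [coe_filter, Set.mem_ofPred_eq] at he
  obtain ⟨he, hx, hy⟩ := he
  obtain ⟨y, hy'⟩ := card_eq_one.mp hy
  have hye : y ∈ e ∩ Y := by rw [hy']; simp
  have hu : insert y (e ∩ X) = e := by
    apply eq_of_subset_of_card_le
    · intro t; simp only [mem_insert, mem_inter]; have := (mem_inter.mp hye).1; grind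
    · rw [card_insert_of_notMem, hx, hE e he]
      intro h
      exact (Finset.disjoint_left.mp hXY) (mem_inter.mp h).2 (mem_inter.mp hye).2
  refine ⟨(e ∩ X, y), ?_, hu⟩
  simp only [coe_filter, Set.mem_ofPred_eq, mem_product, mem_powersetCard]
  exact ⟨⟨⟨inter_subset_right, hx⟩, (mem_inter.mp hye).2⟩, by rw [hu]; exact he⟩

lemma aux_xyz {V : Type} [DecidableEq V]
    (E : Finset (Finset V)) (X Y Z : Finset V)
    (hXY : Disjoint X Y) (hXZ : Disjoint X Z) (hYZ : Disjoint Y Z) :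
    ((X ×ˢ Y ×ˢ Z).filter (fun q => {q.1, q.2.1, q.2.2} ∈ E)).card ≤ eXYZ E X Y Z := by
  unfold eXYZ
  have key : ∀ x ∈ X, ∀ y ∈ Y, ∀ z ∈ Z, ({x, y, z} : Finset V) ∩ X = {x} ∧
      ({x, y, z} : Finset V) ∩ Y = {y} ∧ ({x, y, z} : Finset V) ∩ Z = {z} := by
    intro x hx y hy z hz
    have := aux_inter hXY hXZ hYZ (singleton_subset_iff.mpr hx) hy hz
    have e : ({x, y, z} : Finset V) = insert y (insert z {x}) := by
      ext t; simp only [mem_insert, mem_singleton]; tauto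
    rwa [e]
  apply card_le_card_of_injOn (fun q => {q.1, q.2.1, q.2.2})
  · rintro ⟨x, y, z⟩ h
    simp only [coe_filter, Set.mem_ofPred_eq, mem_product] at h
    obtain ⟨⟨hx, hy, hz⟩, h⟩ := h
    obtain ⟨k1, k2, k3⟩ := key x hx y hy z hz
    simp only [coe_filter, Set.mem_ofPred_eq]
    exact ⟨h, by rw [k1]; simp, by rw [k2]; simp, by rw [k3]; simp⟩
  · rintro ⟨x, y, z⟩ h ⟨x', y', z'⟩ h' heq
    simp only [coe_filter, Set.mem_ofPred_eq, mem_product] at h h' heq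
    obtain ⟨⟨hx, hy, hz⟩, h⟩ := h
    obtain ⟨⟨hx', hy', hz'⟩, h'⟩ := h'
    obtain ⟨k1, k2, k3⟩ := key x hx y hy z hz
    obtain ⟨l1, l2, l3⟩ := key x' hx' y' hy' z' hz'
    rw [heq] at k1 k2 k3
    rw [k1] at l1; rw [k2] at l2; rw [k3] at l3
    simp only [singleton_inj] at l1 l2 l3
    simp [l1, l2, l3]

lemma aux_count {V : Type} [Fintype V] [DecidableEq V]
    (E : Finset (Finset V)) (hE : ∀ e ∈ E, e.card = 3) (X Y Z : Finset V)
    (hXY : Disjoint X Y) (hXZ : Disjoint X Z) (hYZ : Disjoint Y Z) :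
    ((X.powersetCard 2 ×ˢ Y ×ˢ Z).filter (fun q => (∀ x ∈ q.1, {x, q.2.1, q.2.2} ∉ E) ∧
      insert q.2.1 q.1 ∈ E ∧ insert q.2.2 q.1 ∈ E)).card ≤ inducedD2Count E := by
  unfold inducedD2Count
  apply card_le_card_of_injOn (fun q => insert q.2.1 (insert q.2.2 q.1))
  · rintro ⟨p, y, z⟩ h
    simp only [coe_filter, Set.mem_ofPred_eq, mem_product, mem_powersetCard] at h
    obtain ⟨⟨⟨hp, hp2⟩, hy, hz⟩, hn, h1, h2⟩ := h
    obtain ⟨a, b, hab, rfl⟩ := card_eq_two.mp hp2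
    have ha : a ∈ X := hp (by simp)
    have hb : b ∈ X := hp (by simp)
    have hay : a ≠ y := fun h => Finset.disjoint_left.mp hXY ha (h ▸ hy)
    have hby : b ≠ y := fun h => Finset.disjoint_left.mp hXY hb (h ▸ hy)
    have haz : a ≠ z := fun h => Finset.disjoint_left.mp hXZ ha (h ▸ hz)
    have hbz : b ≠ z := fun h => Finset.disjoint_left.mp hXZ hb (h ▸ hz)
    have hyz : y ≠ z := fun h => Finset.disjoint_left.mp hYZ hy (h ▸ hz)
    simp only [coe_filter, Set.mem_ofPred_eq, mem_powersetCard]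
    refine ⟨⟨subset_univ _, ?_⟩, aux_d2 E hE a b y z hab hay hby haz hbz hyz h1 h2
      (hn a (by simp)) (hn b (by simp))⟩
    rw [card_insert_of_notMem, card_insert_of_notMem, card_pair hab] <;> simp <;> tauto
  · rintro ⟨p, y, z⟩ h ⟨p', y', z'⟩ h' heq
    simp only [coe_filter, Set.mem_ofPred_eq, mem_product, mem_powersetCard] at h h' heq
    obtain ⟨⟨⟨hp, -⟩, hy, hz⟩, -⟩ := h
    obtain ⟨⟨⟨hp', -⟩, hy', hz'⟩, -⟩ := h'
    obtain ⟨k1, k2, k3⟩ := aux_inter hXY hXZ hYZ hp hy hz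
    obtain ⟨l1, l2, l3⟩ := aux_inter hXY hXZ hYZ hp' hy' hz'
    rw [heq] at k1 k2 k3
    rw [k1] at l1; rw [k2] at l2; rw [k3] at l3
    simp only [singleton_inj] at l2 l3
    simp [l1, l2, l3]

/-- Bad pairs. -/
lemma aux_bad {V : Type} [DecidableEq V]
    (E : Finset (Finset V)) (hE : ∀ e ∈ E, e.card = 3) (X Y : Finset V)
    (hXY : Disjoint X Y) (δ : ℝ) (hX : 2 ≤ X.card) (hY : 0 < Y.card)
    (h : dXXY E X Y ≥ 1 - δ) :
    (((X.powersetCard 2 ×ˢ Y).filter (fun q => insert q.2 q.1 ∉ E)).card : ℝ) ≤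
      δ * ((X.card.choose 2 : ℝ) * Y.card) := by
  have h1 := aux_xxy E hE X Y hXY
  have h2 := card_filter_add_card_filter_not (s := X.powersetCard 2 ×ˢ Y)
    (fun q => insert q.2 q.1 ∈ E)
  rw [card_product, card_powersetCard] at h2
  have hpos : (0 : ℝ) < (X.card.choose 2 : ℝ) * Y.card := by
    have : 0 < X.card.choose 2 := Nat.choose_pos hX
    positivity
  unfold dXXY at h
  rw [ge_iff_le, le_div_iff₀ hpos] at h
  have h1' : (eXXY E X Y : ℝ) ≤ _ := Nat.cast_le.mpr h1
  have h2' := congrArg (Nat.cast : ℕ → ℝ) h2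
  push_cast at h2'
  linarith

lemma aux_A {V : Type} [Fintype V] [DecidableEq V]
    (E : Finset (Finset V)) (X Y Z : Finset V) :
    ((X.powersetCard 2 ×ˢ Y ×ˢ Z).filter (fun q => ∀ x ∈ q.1, {x, q.2.1, q.2.2} ∉ E)).card =
      ∑ w ∈ Y ×ˢ Z, (X.filter (fun x => {x, w.1, w.2} ∉ E)).card.choose 2 := by
  rw [card_filter, sum_product_right]
  apply sum_congr rfl
  intro w _
  rw [← card_powersetCard, ← card_filter]
  congr 1
  ext p
  simp only [mem_filter, mem_powersetCard, subset_iff]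
  grind

lemma aux_N {V : Type} [DecidableEq V]
    (E : Finset (Finset V)) (X Y Z : Finset V) :
    ((X ×ˢ Y ×ˢ Z).filter (fun q => {q.1, q.2.1, q.2.2} ∉ E)).card =
      ∑ w ∈ Y ×ˢ Z, (X.filter (fun x => {x, w.1, w.2} ∉ E)).card := by
  rw [card_filter, sum_product_right]
  apply sum_congr rfl
  intro w _
  rw [card_filter]

theorem pairs_to_triple_dense {V : Type} [Fintype V] [DecidableEq V]
    (E : Finset (Finset V)) (hE : ∀ e ∈ E, e.card = 3)
    (ε : ℝ) (hε : 0 < ε) (X Y Z : Finset V)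
    (hXY : Disjoint X Y) (hXZ : Disjoint X Z) (hYZ : Disjoint Y Z)
    (hX : (X.card : ℝ) ≥ 2 / ε)
    (h1 : dXXY E X Y ≥ 1 - ε ^ 2 / 8) (h2 : dXXY E X Z ≥ 1 - ε ^ 2 / 8) :
    dXYZ E X Y Z ≥ 1 - ε ∨
    (inducedD2Count E : ℝ) ≥
      ε ^ 2 / 16 * (X.card : ℝ) ^ 2 * (Y.card : ℝ) * (Z.card : ℝ) := by
  by_contra hcon
  push Not at hcon
  obtain ⟨hd, hc⟩ := hcon
  have hd0 : 0 ≤ dXYZ E X Y Z := by unfold dXYZ; positivity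
  have hε1 : ε < 1 := by linarith
  have hn : 2 ≤ ε * (X.card : ℝ) := by
    rw [ge_iff_le, div_le_iff₀ hε] at hX; linarith
  have hX2 : 2 ≤ X.card := by
    have : (2 : ℝ) ≤ X.card := by nlinarith [(Nat.cast_nonneg X.card : (0 : ℝ) ≤ X.card)]
    exact_mod_cast this
  rcases Nat.eq_zero_or_pos Y.card with hY | hY
  · rw [hY] at hc; simp at hc; linarith [(Nat.cast_nonneg (inducedD2Count E) : (0:ℝ) ≤ _)]
  rcases Nat.eq_zero_or_pos Z.card with hZ | hZ
  · rw [hZ] at hc; simp at hc; linarith [(Nat.cast_nonneg (inducedD2Count E) : (0:ℝ) ≤ _)]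
  have b1 := aux_bad E hE X Y hXY _ hX2 hY (by exact h1)
  have b2 := aux_bad E hE X Z hXZ _ hX2 hZ (by exact h2)
  have hcount := aux_count E hE X Y Z hXY hXZ hYZ
  have hA := aux_A E X Y Z
  have hN := aux_N E X Y Z
  have hT := aux_xyz E X Y Z hXY hXZ hYZ
  have hT2 := card_filter_add_card_filter_not (s := X ×ˢ Y ×ˢ Z)
    (fun q => {q.1, q.2.1, q.2.2} ∈ E)
  rw [hN, card_product, card_product] at hT2
  -- union bound
  have hU : ((X.powersetCard 2 ×ˢ Y ×ˢ Z).filter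
        (fun q => ∀ x ∈ q.1, {x, q.2.1, q.2.2} ∉ E)).card ≤
      ((X.powersetCard 2 ×ˢ Y ×ˢ Z).filter (fun q => (∀ x ∈ q.1, {x, q.2.1, q.2.2} ∉ E) ∧
        insert q.2.1 q.1 ∈ E ∧ insert q.2.2 q.1 ∈ E)).card +
      ((X.powersetCard 2 ×ˢ Y).filter (fun q => insert q.2 q.1 ∉ E)).card * Z.card +
      ((X.powersetCard 2 ×ˢ Z).filter (fun q => insert q.2 q.1 ∉ E)).card * Y.card := by
    have e1 : ((X.powersetCard 2 ×ˢ Y ×ˢ Z).filter (fun q => insert q.2.1 q.1 ∉ E)).card ≤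
        ((X.powersetCard 2 ×ˢ Y).filter (fun q => insert q.2 q.1 ∉ E)).card * Z.card := by
      rw [← card_product]
      apply card_le_card_of_injOn (fun q => ((q.1, q.2.1), q.2.2))
      · rintro ⟨p, y, z⟩ h
        simp only [coe_filter, Set.mem_ofPred_eq, mem_product, coe_product, Set.mem_prod,
          mem_coe] at h ⊢
        tauto
      · rintro ⟨p, y, z⟩ _ ⟨p', y', z'⟩ _ h
        simp only [Prod.mk.injEq] at h ⊢
        tauto
    have e2 : ((X.powersetCard 2 ×ˢ Y ×ˢ Z).filter (fun q => insert q.2.2 q.1 ∉ E)).card ≤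
        ((X.powersetCard 2 ×ˢ Z).filter (fun q => insert q.2 q.1 ∉ E)).card * Y.card := by
      rw [← card_product]
      apply card_le_card_of_injOn (fun q => ((q.1, q.2.2), q.2.1))
      · rintro ⟨p, y, z⟩ h
        simp only [coe_filter, Set.mem_ofPred_eq, mem_product, coe_product, Set.mem_prod,
          mem_coe] at h ⊢
        tauto
      · rintro ⟨p, y, z⟩ _ ⟨p', y', z'⟩ _ h
        simp only [Prod.mk.injEq] at h ⊢
        tauto
    refine le_trans (le_trans (card_le_card ?_) (card_union_le _ _))
      (add_le_add (le_trans (card_union_le _ _) (add_le_add le_rfl e1)) e2)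
    intro q hq
    simp only [mem_union, mem_filter] at hq ⊢
    tauto
  rw [hA] at hU
  -- convexity
  have hJ : ∀ w ∈ Y ×ˢ Z, (ε * X.card) * (ε * X.card - 1) / 2 +
      (((X.filter (fun x => {x, w.1, w.2} ∉ E)).card : ℝ) - ε * X.card) *
        ((2 * (ε * X.card) - 1) / 2) ≤
      (((X.filter (fun x => {x, w.1, w.2} ∉ E)).card.choose 2 : ℕ) : ℝ) := by
    intro w _
    rw [Nat.cast_choose_two]
    nlinarith [sq_nonneg (((X.filter (fun x => {x, w.1, w.2} ∉ E)).card : ℝ) - ε * X.card)]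
  have hJ2 := sum_le_sum hJ
  rw [sum_add_distrib, ← sum_mul, sum_sub_distrib, sum_const, sum_const, card_product] at hJ2
  simp only [nsmul_eq_mul] at hJ2
  rw [← Nat.cast_sum, ← Nat.cast_sum] at hJ2
  generalize (∑ w ∈ Y ×ˢ Z, (X.filter (fun x => {x, w.1, w.2} ∉ E)).card.choose 2) = SA at *
  generalize (∑ w ∈ Y ×ˢ Z, (X.filter (fun x => {x, w.1, w.2} ∉ E)).card) = SN at *
  generalize ((X.powersetCard 2 ×ˢ Y).filter (fun q => insert q.2 q.1 ∉ E)).card = B1 at *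
  generalize ((X.powersetCard 2 ×ˢ Z).filter (fun q => insert q.2 q.1 ∉ E)).card = B2 at *
  have hU' : (SA : ℝ) ≤ inducedD2Count E + B1 * Z.card + B2 * Y.card := by
    exact_mod_cast (by omega : SA ≤ inducedD2Count E + B1 * Z.card + B2 * Y.card)
  have hS : ((X.card * (Y.card * Z.card) : ℕ) : ℝ) ≤ ((eXYZ E X Y Z + SN : ℕ) : ℝ) :=
    Nat.cast_le.mpr (by omega)
  push_cast at hS hJ2
  have yp : (0 : ℝ) < Y.card := by exact_mod_cast hY
  have zp : (0 : ℝ) < Z.card := by exact_mod_cast hZ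
  have xp : (0 : ℝ) < X.card := by exact_mod_cast (by omega : 0 < X.card)
  unfold dXYZ at hd
  rw [div_lt_iff₀ (by positivity)] at hd
  rw [Nat.cast_choose_two] at b1 b2
  generalize (X.card : ℝ) = n at *
  generalize (Y.card : ℝ) = y at *
  generalize (Z.card : ℝ) = z at *
  have hyz : 0 < y * z := by positivity
  have g1 : 0 ≤ (SN - y * z * (ε * n)) * ((2 * (ε * n) - 1) / 2) := by
    apply mul_nonneg <;> nlinarith
  have g2 : y * z * ((ε * n) ^ 2 / 4) ≤ y * z * ((ε * n) * (ε * n - 1) / 2) := by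
    apply mul_le_mul_of_nonneg_left _ hyz.le
    nlinarith
  have g3 : (B1 : ℝ) * z ≤ ε ^ 2 / 16 * n ^ 2 * (y * z) - ε ^ 2 / 16 * n * (y * z) := by
    have := mul_le_mul_of_nonneg_right b1 zp.le
    linarith
  have g4 : (B2 : ℝ) * y ≤ ε ^ 2 / 16 * n ^ 2 * (y * z) - ε ^ 2 / 16 * n * (y * z) := by
    have := mul_le_mul_of_nonneg_right b2 yp.le
    linarith
  have g5 : 0 ≤ ε ^ 2 / 16 * n * (y * z) := by positivity
  have g6 : 0 ≤ ε ^ 2 / 16 * n ^ 2 * (y * z) := by positivity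
  linarith
end

section
/- Let γ > 0, let H be a 3-uniform hypergraph on n vertices, let v ∈ V(H), and let X, Y, Z ⊆ V(H) \ {v} be pairwise disjoint with |X|, |Y| ≥ 2/γ. Suppose d_{L(v)}(X,Z) ≥ 1 − γ²/80, d_{L(v)}(Y,Z) ≤ γ²/80, and d_{L(v)}(X,Y) ≥ 1 − γ²/80. Then one of the following holds: (1) d(X,X,Y) ≥ 1 − γ and d(Y,Y,X) ≥ 1 − γ; (2) H contains at least (γ²/128)·min{|X|²|Y||Z|, |X||Y|²|Z|, |X|²|Y|²} induced copies of D₂; (3) H contains at least (γ²/128)·(1/n)·min{|X|²|Y||Z|, |X||Y|²|Z|} induced copies of D₂ which contain v. -/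
open Finset

/-- The number of induced copies of `D₂` which contain the vertex `v`. -/
def inducedD2CountVia {V : Type} [Fintype V] [DecidableEq V]
    (E : Finset (Finset V)) (v : V) : ℕ :=
  (((Finset.univ : Finset V).powersetCard 4).filter
    (fun S => v ∈ S ∧ (E.filter (fun e => e ⊆ S)).card = 2)).card

/-- The number of edges of the link graph of `v` between disjoint sets `A` and `B`:
pairs `(a,b) ∈ A × B` with `{v,a,b}` a hyperedge. -/
def eLink {V : Type} [DecidableEq V] (E : Finset (Finset V)) (v : V) (A B : Finset V) : ℕ :=
  ((A ×ˢ B).filter (fun p => ({v, p.1, p.2} : Finset V) ∈ E)).card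

/-- The density of the link graph of `v` between disjoint sets `A` and `B`. -/
noncomputable def dLink {V : Type} [DecidableEq V] (E : Finset (Finset V)) (v : V)
    (A B : Finset V) : ℝ :=
  (eLink E v A B : ℝ) / ((A.card : ℝ) * (B.card : ℝ))

noncomputable def ind (p : Prop) : ℝ := by classical exact if p then 1 else 0

lemma ind_nonneg (p : Prop) : 0 ≤ ind p := by unfold ind; split_ifs <;> norm_num
lemma ind_le_one (p : Prop) : ind p ≤ 1 := by unfold ind; split_ifs <;> norm_num
lemma ind_true {p : Prop} (h : p) : ind p = 1 := by simp [ind, h]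
lemma ind_false {p : Prop} (h : ¬ p) : ind p = 0 := by simp [ind, h]
lemma ind_not (p : Prop) : ind (¬ p) = 1 - ind p := by
  by_cases h : p
  · rw [ind_true h, ind_false (not_not.mpr h)]; norm_num
  · rw [ind_false h, ind_true h]; norm_num

lemma sum_ind {ι : Type} (T : Finset ι) (p : ι → Prop) [DecidablePred p] :
    ∑ i ∈ T, ind (p i) = ((T.filter p).card : ℝ) := by
  rw [Finset.card_filter]; push_cast
  refine Finset.sum_congr rfl fun i _ => ?_
  by_cases h : p i <;> simp [ind, h]

def IsD2 {V : Type} [DecidableEq V] (E : Finset (Finset V)) (S : Finset V) : Prop :=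
  S.card = 4 ∧ (E.filter (fun e => e ⊆ S)).card = 2

lemma sum_D2_le {V ι : Type} [Fintype V] [DecidableEq V] (E : Finset (Finset V))
    (T : Finset ι) (f : ι → Finset V) (hf : Set.InjOn f T) :
    ∑ i ∈ T, ind (IsD2 E (f i)) ≤ (inducedD2Count E : ℝ) := by
  classical
  rw [sum_ind]
  unfold inducedD2Count
  norm_cast
  refine Finset.card_le_card_of_injOn f ?_ (hf.mono (by intro i hi; simp at hi ⊢; exact hi.1))
  intro i hi
  rw [mem_coe, mem_filter] at hi
  simp [IsD2] at hi ⊢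
  exact hi.2

lemma sum_D2_via_le {V ι : Type} [Fintype V] [DecidableEq V] (E : Finset (Finset V)) (v : V)
    (T : Finset ι) (f : ι → Finset V) (hf : Set.InjOn f T) (hv : ∀ i ∈ T, v ∈ f i) :
    ∑ i ∈ T, ind (IsD2 E (f i)) ≤ (inducedD2CountVia E v : ℝ) := by
  classical
  rw [sum_ind]
  unfold inducedD2CountVia
  norm_cast
  refine Finset.card_le_card_of_injOn f ?_ (hf.mono (by intro i hi; simp at hi ⊢; exact hi.1))
  intro i hi
  rw [mem_coe, mem_filter] at hi
  simp [IsD2] at hi ⊢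
  exact ⟨hi.2.1, hv i hi.1, hi.2.2⟩

lemma isD2_iff {V : Type} [DecidableEq V] (E : Finset (Finset V)) (hE : ∀ e ∈ E, e.card = 3)
    {a b c d : V} (hab : a ≠ b) (hac : a ≠ c) (had : a ≠ d) (hbc : b ≠ c) (hbd : b ≠ d)
    (hcd : c ≠ d) :
    IsD2 E {a, b, c, d} ↔
      (if ({a, b, c} : Finset V) ∈ E then 1 else 0) + (if ({a, b, d} : Finset V) ∈ E then 1 else 0)
      + (if ({a, c, d} : Finset V) ∈ E then 1 else 0)
      + (if ({b, c, d} : Finset V) ∈ E then 1 else 0) = 2 := by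
  have h4 : ({a, b, c, d} : Finset V).card = 4 := by
    simp [*]
  have hset : E.filter (fun e => e ⊆ ({a, b, c, d} : Finset V)) =
      ({{a, b, c}, {a, b, d}, {a, c, d}, {b, c, d}} : Finset (Finset V)).filter (· ∈ E) := by
    ext e
    simp only [mem_filter, mem_insert, mem_singleton]
    constructor
    · rintro ⟨he, hs⟩
      refine ⟨?_, he⟩
      have h3 := hE e he
      have h1 : (({a, b, c, d} : Finset V) \ e).card = 1 := by
        rw [card_sdiff_of_subset hs, h4, h3]
      obtain ⟨w, hw⟩ := card_eq_one.mp h1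
      have he' : e = ({a, b, c, d} : Finset V) \ {w} := by
        rw [← hw, sdiff_sdiff_right_self]; exact (inf_eq_right.mpr hs).symm
      have hwm : w ∈ ({a, b, c, d} : Finset V) := by
        have : w ∈ ({a, b, c, d} : Finset V) \ e := by rw [hw]; simp
        exact (mem_sdiff.mp this).1
      simp only [mem_insert, mem_singleton] at hwm
      rcases hwm with rfl | rfl | rfl | rfl
      · right; right; right; rw [he']; ext t; simp; grind
      · right; right; left; rw [he']; ext t; simp; grind
      · right; left; rw [he']; ext t; simp; grind
      · left; rw [he']; ext t; simp; grind
    · rintro ⟨h, he⟩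
      refine ⟨he, ?_⟩
      rcases h with rfl | rfl | rfl | rfl <;> intro t <;> simp <;> tauto
  have n1 : ({a, b, c} : Finset V) ∉ ({{a, b, d}, {a, c, d}, {b, c, d}} : Finset (Finset V)) := by
    intro h
    simp only [mem_insert, mem_singleton] at h
    rcases h with h | h | h
    · have : c ∈ ({a, b, d} : Finset V) := by rw [← h]; simp
      simp at this; grind
    · have : b ∈ ({a, c, d} : Finset V) := by rw [← h]; simp
      simp at this; grind
    · have : a ∈ ({b, c, d} : Finset V) := by rw [← h]; simp
      simp at this; grind
  have n2 : ({a, b, d} : Finset V) ∉ ({{a, c, d}, {b, c, d}} : Finset (Finset V)) := by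
    intro h
    simp only [mem_insert, mem_singleton] at h
    rcases h with h | h
    · have : b ∈ ({a, c, d} : Finset V) := by rw [← h]; simp
      simp at this; grind
    · have : a ∈ ({b, c, d} : Finset V) := by rw [← h]; simp
      simp at this; grind
  have n3 : ({a, c, d} : Finset V) ∉ ({{b, c, d}} : Finset (Finset V)) := by
    intro h
    simp only [mem_singleton] at h
    have : a ∈ ({b, c, d} : Finset V) := by rw [← h]; simp
    simp at this; grind
  unfold IsD2
  rw [hset, card_filter, sum_insert n1, sum_insert n2, sum_insert n3, sum_singleton]
  simp only [h4, true_and, ← add_assoc]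

lemma sum_pairs {V : Type} [DecidableEq V] (Y : Finset V) (f : V → ℝ) (hf : ∀ y, 0 ≤ f y) :
    ∑ P ∈ Y.powersetCard 2, ∑ y ∈ P, f y ≤ ((Y.card : ℝ)) * ∑ y ∈ Y, f y := by
  have h1 : ∑ P ∈ Y.powersetCard 2, ∑ y ∈ P, f y
      = ∑ y ∈ Y, ∑ P ∈ (Y.powersetCard 2).filter (fun P => y ∈ P), f y := by
    apply Finset.sum_comm'
    intro P y
    simp only [mem_powersetCard, mem_filter]
    constructor
    · rintro ⟨⟨h, h2⟩, hy⟩; exact ⟨⟨⟨h, h2⟩, hy⟩, h hy⟩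
    · rintro ⟨⟨⟨h, h2⟩, hy⟩, _⟩; exact ⟨⟨h, h2⟩, hy⟩
  rw [h1, mul_sum]
  refine sum_le_sum fun y hy => ?_
  rw [sum_const, nsmul_eq_mul]
  refine mul_le_mul_of_nonneg_right ?_ (hf y)
  norm_cast
  rw [← Nat.choose_one_right Y.card, ← card_powersetCard]
  refine card_le_card_of_injOn (fun P => P.erase y) ?_ ?_
  · intro P hP
    simp only [coe_filter, mem_powersetCard, Set.mem_ofPred_eq, mem_coe] at hP ⊢
    refine ⟨(erase_subset _ _).trans hP.1.1, ?_⟩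
    rw [card_erase_of_mem hP.2, hP.1.2]
  · intro P hP Q hQ h
    simp only [coe_filter, mem_powersetCard, Set.mem_ofPred_eq] at hP hQ h
    rw [← insert_erase hP.2, ← insert_erase hQ.2, h]

lemma logic_one {V : Type} [DecidableEq V] (E : Finset (Finset V)) (hE : ∀ e ∈ E, e.card = 3)
    {v x p q z : V} (hvx : v ≠ x) (hvp : v ≠ p) (hvq : v ≠ q) (hvz : v ≠ z)
    (hxp : x ≠ p) (hxq : x ≠ q) (hxz : x ≠ z) (hpq : p ≠ q) (hpz : p ≠ z) (hqz : q ≠ z)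
    (h0 : ({x, p, q} : Finset V) ∉ E) (h1 : ({v, x, p} : Finset V) ∈ E)
    (h2 : ({v, x, q} : Finset V) ∈ E) (h3 : ({v, p, z} : Finset V) ∉ E)
    (h4 : ({v, q, z} : Finset V) ∉ E) (h5 : ({v, x, z} : Finset V) ∈ E)
    (n1 : ¬ IsD2 E {v, x, p, z}) (n2 : ¬ IsD2 E {v, x, q, z}) (n3 : ¬ IsD2 E {x, p, q, z})
    (n4 : ¬ IsD2 E {v, x, p, q}) (n5 : ¬ IsD2 E {v, p, q, z}) : False := by
  rw [isD2_iff E hE (by assumption) (by assumption) (by assumption) (by assumption)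
    (by assumption) (by assumption)] at n1 n2 n3 n4 n5
  simp only [h0, h1, h2, h3, h4, h5, if_true, if_false] at n1 n2 n3 n4 n5
  split_ifs at n1 n2 n3 n4 n5 <;> simp_all

lemma point_one {V : Type} [DecidableEq V] (E : Finset (Finset V)) (hE : ∀ e ∈ E, e.card = 3)
    (v : V) (X Y Z : Finset V)
    (hvX : v ∉ X) (hvY : v ∉ Y) (hvZ : v ∉ Z)
    (hXY : Disjoint X Y) (hXZ : Disjoint X Z) (hYZ : Disjoint Y Z)
    {x z : V} {P : Finset V} (hx : x ∈ X) (hP : P ∈ Y.powersetCard 2) (hz : z ∈ Z) :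
    ind (insert x P ∉ E) ≤ ∑ y ∈ P, ind (({v, x, y} : Finset V) ∉ E)
      + ∑ y ∈ P, ind (({v, y, z} : Finset V) ∈ E) + ∑ y ∈ P, ind (IsD2 E {v, x, y, z})
      + ind (({v, x, z} : Finset V) ∉ E) + ind (IsD2 E (insert x (insert z P)))
      + ind (IsD2 E (insert v (insert x P))) + ind (IsD2 E (insert v (insert z P))) := by
  rw [mem_powersetCard] at hP
  obtain ⟨hPY, hP2⟩ := hP
  obtain ⟨p, q, hpq, rfl⟩ := card_eq_two.mp hP2
  have hp : p ∈ Y := hPY (by simp)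
  have hq : q ∈ Y := hPY (by simp)
  have hvx : v ≠ x := fun h => hvX (h ▸ hx)
  have hvp : v ≠ p := fun h => hvY (h ▸ hp)
  have hvq : v ≠ q := fun h => hvY (h ▸ hq)
  have hvz : v ≠ z := fun h => hvZ (h ▸ hz)
  have hxp : x ≠ p := disjoint_left.mp hXY hx |> fun h h' => h (h' ▸ hp)
  have hxq : x ≠ q := disjoint_left.mp hXY hx |> fun h h' => h (h' ▸ hq)
  have hxz : x ≠ z := disjoint_left.mp hXZ hx |> fun h h' => h (h' ▸ hz)
  have hpz : p ≠ z := disjoint_left.mp hYZ hp |> fun h h' => h (h' ▸ hz)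
  have hqz : q ≠ z := disjoint_left.mp hYZ hq |> fun h h' => h (h' ▸ hz)
  rw [sum_pair hpq, sum_pair hpq, sum_pair hpq]
  have e1 : (insert x (insert z {p, q}) : Finset V) = {x, p, q, z} := by
    ext t; simp only [mem_insert, mem_singleton]; tauto
  have e2 : (insert v (insert z {p, q}) : Finset V) = {v, p, q, z} := by
    ext t; simp only [mem_insert, mem_singleton]; tauto
  rw [e1, e2]
  have L := logic_one E hE hvx hvp hvq hvz hxp hxq hxz hpq hpz hqz
  have a1 := ind_nonneg (({v, x, p} : Finset V) ∉ E)
  have a2 := ind_nonneg (({v, x, q} : Finset V) ∉ E)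
  have a3 := ind_nonneg (({v, p, z} : Finset V) ∈ E)
  have a4 := ind_nonneg (({v, q, z} : Finset V) ∈ E)
  have a5 := ind_nonneg (IsD2 E {v, x, p, z})
  have a6 := ind_nonneg (IsD2 E {v, x, q, z})
  have a7 := ind_nonneg (({v, x, z} : Finset V) ∉ E)
  have a8 := ind_nonneg (IsD2 E {x, p, q, z})
  have a9 := ind_nonneg (IsD2 E {v, x, p, q})
  have a10 := ind_nonneg (IsD2 E {v, p, q, z})
  have a0 := ind_le_one (({x, p, q} : Finset V) ∉ E)
  by_contra hcon
  have h0 : ({x, p, q} : Finset V) ∉ E := by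
    by_contra h
    rw [ind_false (p := ({x, p, q} : Finset V) ∉ E) (fun hh => hh h)] at hcon
    apply hcon; linarith
  have key : ∀ r : Prop, (ind r = 1 → False) → ¬ r := fun r h hr => h (ind_true hr)
  refine L h0 ?_ ?_ ?_ ?_ ?_ ?_ ?_ ?_ ?_ ?_
  · by_contra h; rw [ind_true h] at hcon; apply hcon; linarith
  · by_contra h; rw [ind_true (p := ({v, x, q} : Finset V) ∉ E) h] at hcon; apply hcon; linarith
  · refine key _ fun h => hcon ?_; linarith
  · refine key _ fun h => hcon ?_; linarith
  · by_contra h; rw [ind_true (p := ({v, x, z} : Finset V) ∉ E) h] at hcon; apply hcon; linarith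
  · refine key _ fun h => hcon ?_; linarith
  · refine key _ fun h => hcon ?_; linarith
  · refine key _ fun h => hcon ?_; linarith
  · refine key _ fun h => hcon ?_; linarith
  · refine key _ fun h => hcon ?_; linarith

lemma point_two {V : Type} [DecidableEq V] (E : Finset (Finset V)) (hE : ∀ e ∈ E, e.card = 3)
    (X Y : Finset V) (hXY : Disjoint X Y)
    {Q P : Finset V} (hQ : Q ∈ X.powersetCard 2) (hP : P ∈ Y.powersetCard 2) :
    ind (∀ y ∈ P, insert y Q ∉ E) ≤ ind (IsD2 E (Q ∪ P)) + ∑ x ∈ Q, ind (insert x P ∉ E) := by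
  rw [mem_powersetCard] at hP hQ
  obtain ⟨hPY, hP2⟩ := hP
  obtain ⟨hQX, hQ2⟩ := hQ
  obtain ⟨p, q, hpq, rfl⟩ := card_eq_two.mp hP2
  obtain ⟨x, w, hxw, rfl⟩ := card_eq_two.mp hQ2
  have hp : p ∈ Y := hPY (by simp)
  have hq : q ∈ Y := hPY (by simp)
  have hx : x ∈ X := hQX (by simp)
  have hw : w ∈ X := hQX (by simp)
  have hxp : x ≠ p := disjoint_left.mp hXY hx |> fun h h' => h (h' ▸ hp)
  have hxq : x ≠ q := disjoint_left.mp hXY hx |> fun h h' => h (h' ▸ hq)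
  have hwp : w ≠ p := disjoint_left.mp hXY hw |> fun h h' => h (h' ▸ hp)
  have hwq : w ≠ q := disjoint_left.mp hXY hw |> fun h h' => h (h' ▸ hq)
  rw [sum_pair hxw]
  have e1 : ({x, w} ∪ {p, q} : Finset V) = {x, w, p, q} := by
    ext t; simp only [mem_insert, mem_singleton, mem_union]; tauto
  rw [e1]
  have a1 := ind_nonneg (({x, p, q} : Finset V) ∉ E)
  have a2 := ind_nonneg (({w, p, q} : Finset V) ∉ E)
  have a3 := ind_nonneg (IsD2 E {x, w, p, q})
  by_cases hb : ∀ y ∈ ({p, q} : Finset V), insert y ({x, w} : Finset V) ∉ E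
  swap
  · rw [ind_false hb]; linarith
  rw [ind_true hb]
  by_cases h1 : ({x, p, q} : Finset V) ∉ E
  · rw [ind_true h1]; linarith
  by_cases h2 : ({w, p, q} : Finset V) ∉ E
  · rw [ind_true h2]; linarith
  push Not at h1 h2
  have b1 := hb p (by simp)
  have b2 := hb q (by simp)
  have e2 : (insert p {x, w} : Finset V) = {x, w, p} := by
    ext t; simp only [mem_insert, mem_singleton]; tauto
  have e3 : (insert q {x, w} : Finset V) = {x, w, q} := by
    ext t; simp only [mem_insert, mem_singleton]; tauto
  rw [e2] at b1
  rw [e3] at b2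
  have : IsD2 E {x, w, p, q} := by
    rw [isD2_iff E hE hxw hxp hxq hwp hwq hpq]
    simp [h1, h2, b1, b2]
  rw [ind_true this]; linarith

lemma eXXY_ge {V : Type} [DecidableEq V] (E : Finset (Finset V))
    (X Y : Finset V) (hXY : Disjoint X Y) :
    ∑ P ∈ X.powersetCard 2, ∑ y ∈ Y, ind (insert y P ∈ E) ≤ (eXXY E X Y : ℝ) := by
  rw [← Finset.sum_product' (f := fun P y => ind (insert y P ∈ E)), sum_ind]
  unfold eXXY
  norm_cast
  have hi : ∀ P ⊆ X, ∀ y ∈ Y, insert y P ∩ X = P ∧ insert y P ∩ Y = {y} := by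
    intro P hP y hy
    have h1 : y ∉ X := disjoint_right.mp hXY hy
    have h2 : P ∩ Y = ∅ := disjoint_iff_inter_eq_empty.mp (hXY.mono_left hP)
    rw [insert_inter_of_notMem h1, insert_inter_of_mem hy, h2, inter_eq_left.mpr hP]
    simp
  refine card_le_card_of_injOn (fun i => insert i.2 i.1) ?_ ?_
  · rintro ⟨P, y⟩ h
    simp only [coe_filter, mem_product, mem_powersetCard, Set.mem_ofPred_eq] at h ⊢
    obtain ⟨r1, r2⟩ := hi P h.1.1.1 y h.1.2
    rw [r1, r2]
    exact ⟨h.2, h.1.1.2, by simp⟩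
  · rintro ⟨P, y⟩ h ⟨P', y'⟩ h' heq
    simp only [coe_filter, mem_product, mem_powersetCard, Set.mem_ofPred_eq] at h h' heq
    obtain ⟨r1, r2⟩ := hi P h.1.1.1 y h.1.2
    obtain ⟨r3, r4⟩ := hi P' h'.1.1.1 y' h'.1.2
    rw [heq] at r1 r2
    rw [r1] at r3; rw [r2] at r4
    simp at r4
    rw [r3, r4]

lemma eLink_eq {V : Type} [DecidableEq V] (E : Finset (Finset V)) (v : V) (A B : Finset V) :
    (eLink E v A B : ℝ) = ∑ a ∈ A, ∑ b ∈ B, ind (({v, a, b} : Finset V) ∈ E) := by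
  rw [← Finset.sum_product' (f := fun a b => ind (({v, a, b} : Finset V) ∈ E)), sum_ind]
  rfl

lemma eLink_compl {V : Type} [DecidableEq V] (E : Finset (Finset V)) (v : V) (A B : Finset V) :
    ∑ a ∈ A, ∑ b ∈ B, ind (({v, a, b} : Finset V) ∉ E) = A.card * B.card - eLink E v A B := by
  rw [eLink_eq]
  simp only [ind_not, sum_sub_distrib, sum_const, nsmul_eq_mul, mul_one]

lemma sum_one {V : Type} [Fintype V] [DecidableEq V] (E : Finset (Finset V))
    (hE : ∀ e ∈ E, e.card = 3)
    (v : V) (X Y Z : Finset V)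
    (hvX : v ∉ X) (hvY : v ∉ Y) (hvZ : v ∉ Z)
    (hXY : Disjoint X Y) (hXZ : Disjoint X Z) (hYZ : Disjoint Y Z) :
    (Z.card : ℝ) * (∑ x ∈ X, ∑ P ∈ Y.powersetCard 2, ind (insert x P ∉ E)) ≤
      Y.card * Z.card * (∑ a ∈ X, ∑ b ∈ Y, ind (({v, a, b} : Finset V) ∉ E))
      + Y.card * X.card * (∑ a ∈ Y, ∑ b ∈ Z, ind (({v, a, b} : Finset V) ∈ E))
      + Y.card * inducedD2CountVia E v
      + (Y.card.choose 2) * (∑ a ∈ X, ∑ b ∈ Z, ind (({v, a, b} : Finset V) ∉ E))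
      + inducedD2Count E + Z.card * inducedD2CountVia E v + X.card * inducedD2CountVia E v := by
  have dXY : ∀ a ∈ X, a ∉ Y := fun a h => disjoint_left.mp hXY h
  have dXZ : ∀ a ∈ X, a ∉ Z := fun a h => disjoint_left.mp hXZ h
  have dYZ : ∀ a ∈ Y, a ∉ Z := fun a h => disjoint_left.mp hYZ h
  have h0 : (Z.card : ℝ) * (∑ x ∈ X, ∑ P ∈ Y.powersetCard 2, ind (insert x P ∉ E))
      = ∑ z ∈ Z, ∑ x ∈ X, ∑ P ∈ Y.powersetCard 2, ind (insert x P ∉ E) := by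
    rw [sum_const, nsmul_eq_mul]
  have h1 := Finset.sum_le_sum fun z (hz : z ∈ Z) => Finset.sum_le_sum fun x (hx : x ∈ X) =>
    Finset.sum_le_sum fun P (hP : P ∈ Y.powersetCard 2) =>
      point_one E hE v X Y Z hvX hvY hvZ hXY hXZ hYZ hx hP hz
  simp only [sum_add_distrib] at h1
  rw [h0]
  refine h1.trans ?_
  clear h1 h0
  gcongr ?_ + ?_ + ?_ + ?_ + ?_ + ?_ + ?_
  · rw [sum_const, nsmul_eq_mul, mul_comm (Y.card : ℝ), mul_assoc]
    gcongr
    rw [mul_sum]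
    gcongr with x hx
    exact sum_pairs Y _ fun y => ind_nonneg _
  · calc _ = ∑ z ∈ Z, (X.card : ℝ) * ∑ P ∈ Y.powersetCard 2, ∑ y ∈ P,
            ind (({v, y, z} : Finset V) ∈ E) := by
          refine sum_congr rfl fun z _ => ?_
          rw [sum_const, nsmul_eq_mul]
      _ ≤ ∑ z ∈ Z, (X.card : ℝ) * (Y.card * ∑ y ∈ Y, ind (({v, y, z} : Finset V) ∈ E)) := by
          gcongr with z hz
          exact sum_pairs Y _ fun y => ind_nonneg _
      _ = _ := by
          rw [sum_comm (s := Y), ← mul_sum, ← mul_sum]; ring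
  · calc _ ≤ ∑ z ∈ Z, ∑ x ∈ X, (Y.card * ∑ y ∈ Y, ind (IsD2 E {v, x, y, z})) := by
          gcongr with z hz x hx
          exact sum_pairs Y _ fun y => ind_nonneg _
      _ = Y.card * ∑ i ∈ Z ×ˢ X ×ˢ Y, ind (IsD2 E {v, i.2.1, i.2.2, i.1}) := by
          rw [sum_product]; simp only [sum_product, mul_sum]
      _ ≤ _ := by
          gcongr
          refine sum_D2_via_le E v _ (fun i : V × V × V => {v, i.2.1, i.2.2, i.1}) ?_ ?_
          · rintro ⟨z, x, y⟩ h ⟨z', x', y'⟩ h' heq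
            simp only [coe_product, Set.mem_prod, mem_coe] at h h'
            have hm := fun t => congrArg (t ∈ ·) heq
            simp only [mem_insert, mem_singleton] at hm
            have m1 := hm x
            have m2 := hm y
            have m3 := hm z
            grind
          · simp
  · rw [mul_sum, sum_comm (s := Z)]
    gcongr with x hx
    rw [mul_sum]
    gcongr with z hz
    rw [sum_const, nsmul_eq_mul, card_powersetCard]
  · calc _ = ∑ i ∈ Z ×ˢ X ×ˢ Y.powersetCard 2,
            ind (IsD2 E (insert i.2.1 (insert i.1 i.2.2))) := by
          rw [sum_product]; simp only [sum_product]
      _ ≤ _ := by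
          refine sum_D2_le E _ (fun i : V × V × Finset V => insert i.2.1 (insert i.1 i.2.2)) ?_
          rintro ⟨z, x, P⟩ h ⟨z', x', P'⟩ h' heq
          simp only [coe_product, Set.mem_prod, mem_coe, mem_powersetCard] at h h'
          have hm := fun t => congrArg (t ∈ ·) heq
          simp only [mem_insert] at hm
          have hx : x = x' := by have := hm x; grind
          have hz : z = z' := by have := hm z; grind
          have hP : P = P' := by ext t; have := hm t; grind
          rw [hx, hz, hP]
  · rw [sum_const, nsmul_eq_mul]
    gcongr
    calc _ = ∑ i ∈ X ×ˢ Y.powersetCard 2,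
            ind (IsD2 E (insert v (insert i.1 i.2))) := by
          rw [sum_product]
      _ ≤ _ := by
          refine sum_D2_via_le E v _ (fun i : V × Finset V => insert v (insert i.1 i.2)) ?_
            (by simp)
          rintro ⟨x, P⟩ h ⟨x', P'⟩ h' heq
          simp only [coe_product, Set.mem_prod, mem_coe, mem_powersetCard] at h h'
          have hm := fun t => congrArg (t ∈ ·) heq
          simp only [mem_insert] at hm
          have hx : x = x' := by have := hm x; grind
          have hP : P = P' := by ext t; have := hm t; grind
          rw [hx, hP]
  · simp only [sum_const, nsmul_eq_mul]
    rw [← mul_sum]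
    gcongr
    calc _ = ∑ i ∈ Z ×ˢ Y.powersetCard 2,
            ind (IsD2 E (insert v (insert i.1 i.2))) := by
          rw [sum_product]
      _ ≤ _ := by
          refine sum_D2_via_le E v _ (fun i : V × Finset V => insert v (insert i.1 i.2)) ?_
            (by simp)
          rintro ⟨x, P⟩ h ⟨x', P'⟩ h' heq
          simp only [coe_product, Set.mem_prod, mem_coe, mem_powersetCard] at h h'
          have hm := fun t => congrArg (t ∈ ·) heq
          simp only [mem_insert] at hm
          have hx : x = x' := by have := hm x; grind
          have hP : P = P' := by ext t; have := hm t; grind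
          rw [hx, hP]

lemma sum_two {V : Type} [Fintype V] [DecidableEq V] (E : Finset (Finset V))
    (hE : ∀ e ∈ E, e.card = 3) (X Y : Finset V) (hXY : Disjoint X Y) (t : ℝ) (ht : 1 ≤ t)
    (hM : t * X.card.choose 2 ≤
      ∑ Q ∈ X.powersetCard 2, ∑ y ∈ Y, ind (insert y Q ∉ E)) :
    t * (t - 1) / 2 * X.card.choose 2 ≤ inducedD2Count E
      + X.card * (∑ x ∈ X, ∑ P ∈ Y.powersetCard 2, ind (insert x P ∉ E)) := by
  classical
  have h1 := Finset.sum_le_sum fun Q (hQ : Q ∈ X.powersetCard 2) =>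
    Finset.sum_le_sum fun P (hP : P ∈ Y.powersetCard 2) => point_two E hE X Y hXY hQ hP
  simp only [sum_add_distrib] at h1
  have h2 : ∑ Q ∈ X.powersetCard 2, ∑ P ∈ Y.powersetCard 2, ind (IsD2 E (Q ∪ P))
      ≤ inducedD2Count E := by
    rw [← Finset.sum_product' (f := fun Q P => ind (IsD2 E (Q ∪ P)))]
    refine sum_D2_le E _ (fun i : Finset V × Finset V => i.1 ∪ i.2) ?_
    rintro ⟨Q, P⟩ h ⟨Q', P'⟩ h' heq
    simp only [coe_product, Set.mem_prod, mem_coe, mem_powersetCard] at h h'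
    have dXY : ∀ a ∈ X, a ∉ Y := fun a h => disjoint_left.mp hXY h
    have hm := fun t => congrArg (t ∈ ·) heq
    simp only [mem_union] at hm
    have hQ : Q = Q' := by ext t; have := hm t; grind
    have hP : P = P' := by ext t; have := hm t; grind
    rw [hQ, hP]
  have h3 : ∑ Q ∈ X.powersetCard 2, ∑ P ∈ Y.powersetCard 2, ∑ x ∈ Q, ind (insert x P ∉ E)
      ≤ X.card * (∑ x ∈ X, ∑ P ∈ Y.powersetCard 2, ind (insert x P ∉ E)) := by
    rw [sum_comm, sum_comm (s := X), mul_sum]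
    gcongr with P hP
    exact sum_pairs X _ fun y => ind_nonneg _
  have h4 : ∀ Q ∈ X.powersetCard 2,
      ((2 * t - 1) * (∑ y ∈ Y, ind (insert y Q ∉ E)) - t ^ 2) / 2 ≤
        ∑ P ∈ Y.powersetCard 2, ind (∀ y ∈ P, insert y Q ∉ E) := by
    intro Q hQ
    rw [sum_ind, sum_ind]
    have : (Y.powersetCard 2).filter (fun P => ∀ y ∈ P, insert y Q ∉ E)
        = (Y.filter (fun y => insert y Q ∉ E)).powersetCard 2 := by
      ext P
      simp only [mem_filter, mem_powersetCard, subset_iff]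
      grind
    rw [this, card_powersetCard, Nat.cast_choose_two]
    nlinarith [sq_nonneg (((Y.filter (fun y => insert y Q ∉ E)).card : ℝ) - t)]
  have h5 := Finset.sum_le_sum h4
  rw [← sum_div, sum_sub_distrib, ← mul_sum, sum_const, nsmul_eq_mul, card_powersetCard] at h5
  nlinarith

set_option maxHeartbeats 2000000 in
theorem homogeneous_dense {V : Type} [Fintype V] [DecidableEq V]
    (E : Finset (Finset V)) (hE : ∀ e ∈ E, e.card = 3)
    (γ : ℝ) (hγ : 0 < γ) (v : V) (X Y Z : Finset V)
    (hvX : v ∉ X) (hvY : v ∉ Y) (hvZ : v ∉ Z)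
    (hXY : Disjoint X Y) (hXZ : Disjoint X Z) (hYZ : Disjoint Y Z)
    (hX : (X.card : ℝ) ≥ 2 / γ) (hY : (Y.card : ℝ) ≥ 2 / γ)
    (hdXZ : dLink E v X Z ≥ 1 - γ ^ 2 / 80)
    (hdYZ : dLink E v Y Z ≤ γ ^ 2 / 80)
    (hdXY : dLink E v X Y ≥ 1 - γ ^ 2 / 80) :
    (dXXY E X Y ≥ 1 - γ ∧ dXXY E Y X ≥ 1 - γ) ∨
    (inducedD2Count E : ℝ) ≥ γ ^ 2 / 128 *
      min (min ((X.card : ℝ) ^ 2 * (Y.card : ℝ) * (Z.card : ℝ))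
               ((X.card : ℝ) * (Y.card : ℝ) ^ 2 * (Z.card : ℝ)))
          ((X.card : ℝ) ^ 2 * (Y.card : ℝ) ^ 2) ∨
    (inducedD2CountVia E v : ℝ) ≥ γ ^ 2 / 128 * (1 / (Fintype.card V : ℝ)) *
      min ((X.card : ℝ) ^ 2 * (Y.card : ℝ) * (Z.card : ℝ))
          ((X.card : ℝ) * (Y.card : ℝ) ^ 2 * (Z.card : ℝ)) := by
  by_cases hγ1 : 1 ≤ γ
  · left
    have h : ∀ A B : Finset V, dXXY E A B ≥ 1 - γ := fun A B => by
      have : 0 ≤ dXXY E A B := by unfold dXXY; positivity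
      linarith
    exact ⟨h _ _, h _ _⟩
  push Not at hγ1
  by_cases hZ0 : Z.card = 0
  · right; left
    rw [hZ0]
    simp only [Nat.cast_zero, mul_zero, min_self]
    rw [min_eq_left (by positivity), mul_zero]
    positivity
  have hz : (0 : ℝ) < Z.card := by exact_mod_cast Nat.pos_of_ne_zero hZ0
  by_contra hcon
  rw [not_or, not_or] at hcon
  obtain ⟨c1, c2, c3⟩ := hcon
  rw [ge_iff_le, not_le] at c2 c3
  have big : ∀ A : Finset V, (A.card : ℝ) ≥ 2 / γ → (3 : ℝ) ≤ A.card ∧ 2 ≤ γ * A.card := by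
    intro A hA
    have h2 : 2 ≤ γ * A.card := by
      rw [ge_iff_le, div_le_iff₀ hγ] at hA; linarith
    refine ⟨?_, h2⟩
    have : (2 : ℝ) < A.card := by
      by_contra h
      push Not at h
      nlinarith
    have : 2 < A.card := by exact_mod_cast this
    exact_mod_cast this
  obtain ⟨hx3, hxγ⟩ := big X hX
  obtain ⟨hy3, hyγ⟩ := big Y hY
  have hxn : (X.card : ℝ) ≤ Fintype.card V := by exact_mod_cast card_le_univ X
  have hyn : (Y.card : ℝ) ≤ Fintype.card V := by exact_mod_cast card_le_univ Y
  have hzn : (Z.card : ℝ) ≤ Fintype.card V := by exact_mod_cast card_le_univ Z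
  have hNv : (0 : ℝ) ≤ inducedD2CountVia E v := by positivity
  have S1 := sum_one E hE v X Y Z hvX hvY hvZ hXY hXZ hYZ
  have S2 := sum_two E hE X Y hXY (γ * Y.card) (by linarith)
  have G1 := eXXY_ge E X Y hXY
  have G2 := eXXY_ge E Y X hXY.symm
  rw [eLink_compl, eLink_compl, ← eLink_eq] at S1
  have K1 : ∑ Q ∈ X.powersetCard 2, ∑ y ∈ Y, ind (insert y Q ∉ E)
      = (X.card.choose 2) * Y.card
        - ∑ Q ∈ X.powersetCard 2, ∑ y ∈ Y, ind (insert y Q ∈ E) := by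
    simp only [ind_not, sum_sub_distrib, sum_const, nsmul_eq_mul, mul_one, card_powersetCard]
  have K2 : ∑ x ∈ X, ∑ P ∈ Y.powersetCard 2, ind (insert x P ∉ E)
      = (Y.card.choose 2) * X.card
        - ∑ P ∈ Y.powersetCard 2, ∑ x ∈ X, ind (insert x P ∈ E) := by
    rw [sum_comm]
    simp only [ind_not, sum_sub_distrib, sum_const, nsmul_eq_mul, mul_one, card_powersetCard]
  rw [K1] at S2
  set B := ∑ x ∈ X, ∑ P ∈ Y.powersetCard 2, ind (insert x P ∉ E) with hB
  clear_value B
  clear K1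
  unfold dLink at hdXZ hdYZ hdXY
  unfold dXXY at c1
  rw [Nat.cast_choose_two] at S1 S2 c1 K2
  rw [Nat.cast_choose_two] at c1
  generalize (∑ Q ∈ X.powersetCard 2, ∑ y ∈ Y, ind (insert y Q ∈ E)) = m1 at *
  generalize (∑ Q ∈ Y.powersetCard 2, ∑ y ∈ X, ind (insert y Q ∈ E)) = m2 at *
  generalize (X.card : ℝ) = x at *
  generalize (Y.card : ℝ) = y at *
  generalize (Z.card : ℝ) = z at *
  generalize (Fintype.card V : ℝ) = n at *
  generalize (inducedD2Count E : ℝ) = N at *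
  generalize (inducedD2CountVia E v : ℝ) = Nv at *
  generalize (eLink E v X Y : ℝ) = lxy at *
  generalize (eLink E v X Z : ℝ) = lxz at *
  generalize (eLink E v Y Z : ℝ) = lyz at *
  generalize (eXXY E X Y : ℝ) = e1 at *
  generalize (eXXY E Y X : ℝ) = e2 at *
  have hx0 : 0 < x := by linarith
  have hy0 : 0 < y := by linarith
  have hn0 : 0 < n := by linarith
  rw [ge_iff_le, le_div_iff₀ (by positivity)] at hdXZ hdXY
  rw [div_le_iff₀ (by positivity)] at hdYZ
  have N1 : N < γ ^ 2 / 128 * (x * y ^ 2 * z) :=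
    c2.trans_le (by gcongr; exact (min_le_left _ _).trans (min_le_right _ _))
  have N2 : N < γ ^ 2 / 128 * (x ^ 2 * y ^ 2) :=
    c2.trans_le (by gcongr; exact min_le_right _ _)
  have N3 : n * Nv < γ ^ 2 / 128 * (x * y ^ 2 * z) := by
    have : Nv < γ ^ 2 / 128 * (1 / n) * (x * y ^ 2 * z) :=
      c3.trans_le (by gcongr; exact min_le_right _ _)
    calc n * Nv < n * (γ ^ 2 / 128 * (1 / n) * (x * y ^ 2 * z)) := by gcongr
      _ = _ := by field_simp
  have B1 : B ≤ γ ^ 2 / 16 * (x * y ^ 2) := by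
    have q1 : y * z * (x * y - lxy) ≤ y * z * (γ ^ 2 / 80 * (x * y)) := by gcongr; linarith
    have q2 : y * x * lyz ≤ y * x * (γ ^ 2 / 80 * (y * z)) := by gcongr
    have q3 : y * (y - 1) / 2 * (x * z - lxz) ≤ y * y / 2 * (γ ^ 2 / 80 * (x * z)) := by
      have : y * (y - 1) / 2 * (x * z - lxz) ≤ y * (y - 1) / 2 * (γ ^ 2 / 80 * (x * z)) := by
        have : 0 ≤ y - 1 := by linarith
        gcongr; linarith
      refine this.trans ?_
      gcongr; linarith
    have q4 : y * Nv ≤ n * Nv := by gcongr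
    have q5 : z * Nv ≤ n * Nv := by gcongr
    have q6 : x * Nv ≤ n * Nv := by gcongr
    have : z * B ≤ z * (γ ^ 2 / 16 * (x * y ^ 2)) := by
      nlinarith
    exact le_of_mul_le_mul_left this hz
  have hxx : x ^ 2 / 3 ≤ x * (x - 1) / 2 := by nlinarith
  have hyy : y ^ 2 / 3 ≤ y * (y - 1) / 2 := by nlinarith
  apply c1
  constructor
  · rw [ge_iff_le, le_div_iff₀ (by apply mul_pos _ hy0; nlinarith)]
    by_contra h
    have S3 := S2 (by linarith)
    have r1 : x * B ≤ x * (γ ^ 2 / 16 * (x * y ^ 2)) := by gcongr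
    have r2 : γ ^ 2 * y ^ 2 / 4 ≤ γ * y * (γ * y - 1) / 2 := by nlinarith
    have r3 : γ ^ 2 * y ^ 2 / 4 * (x ^ 2 / 3) ≤ γ * y * (γ * y - 1) / 2 * (x * (x - 1) / 2) := by
      have : 0 ≤ x * (x - 1) / 2 := le_trans (by positivity) hxx
      have : 0 ≤ γ * y * (γ * y - 1) / 2 := le_trans (by positivity) r2
      gcongr
    have r4 : 0 < γ ^ 2 * y ^ 2 * x ^ 2 := by positivity
    nlinarith
  · rw [ge_iff_le, le_div_iff₀ (by apply mul_pos _ hx0; nlinarith)]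
    have r1 : γ ^ 2 / 16 * (x * y ^ 2) ≤ γ * (y ^ 2 / 3 * x) := by
      have : γ * (γ * (x * y ^ 2)) ≤ γ * (1 * (x * y ^ 2)) := by gcongr
      have : 0 < γ * (x * y ^ 2) := by positivity
      nlinarith
    have r2 : γ * (y ^ 2 / 3 * x) ≤ γ * (y * (y - 1) / 2 * x) := by gcongr
    nlinarith
end

section
/- Let γ > 0, let H be a 3-uniform hypergraph on n vertices, let v ∈ V(H), and let X, Y, Z ⊆ V(H) \ {v} be pairwise disjoint with |X|, |Y| ≥ 2/γ. Suppose d_{L(v)}(X,Z) ≥ 1 − γ²/80, d_{L(v)}(Y,Z) ≤ γ²/80, and d_{L(v)}(X,Y) ≤ γ²/80. Then one of the following holds: (1) d(X,X,Y) ≤ γ and d(Y,Y,X) ≤ γ; (2) H contains at least (γ²/128)·min{|X|²|Y||Z|, |X||Y|²|Z|, |X|²|Y|²} induced copies of D₂; (3) H contains at least (γ²/128)·(1/n)·min{|X|²|Y||Z|, |X||Y|²|Z|} induced copies of D₂ which contain v. -/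
open Finset

lemma hs_card_le {α β : Type} [DecidableEq α] [DecidableEq β] (s : Finset α) (t : Finset β)
    (f : α → β) (m : ℕ) (hf : ∀ q ∈ s, f q ∈ t)
    (hm : ∀ q ∈ s, ∃ T : Finset α, T.card ≤ m ∧ ∀ r ∈ s, f r = f q → r ∈ T) :
    s.card ≤ m * t.card := by
  apply Finset.card_le_mul_card_image_of_maps_to hf
  intro b hb
  by_cases h : ∃ q ∈ s, f q = b
  · obtain ⟨q, hq, rfl⟩ := h
    obtain ⟨T, hT, h2⟩ := hm q hq
    refine le_trans (Finset.card_le_card ?_) hT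
    intro r hr
    rw [Finset.mem_filter] at hr
    exact h2 r hr.1 hr.2
  · rw [Finset.card_eq_zero.2]
    · exact Nat.zero_le _
    · rw [Finset.filter_eq_empty_iff]
      intro q hq h'
      exact h ⟨q, hq, h'⟩

lemma hs_count {V : Type} [DecidableEq V] (E : Finset (Finset V)) (hE : ∀ e ∈ E, e.card = 3)
    (a b c d : V) (hab : a ≠ b) (hac : a ≠ c) (had : a ≠ d) (hbc : b ≠ c) (hbd : b ≠ d)
    (hcd : c ≠ d) :
    (E.filter (fun e => e ⊆ ({a, b, c, d} : Finset V))).card =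
      (if ({b, c, d} : Finset V) ∈ E then 1 else 0) + ((if ({a, c, d} : Finset V) ∈ E then 1 else 0)
      + ((if ({a, b, d} : Finset V) ∈ E then 1 else 0)
        + (if ({a, b, c} : Finset V) ∈ E then 1 else 0))) := by
  set S : Finset V := {a, b, c, d} with hS
  have hS4 : S.card = 4 := by
    rw [hS]; simp [hab, hac, had, hbc, hbd, hcd]
  have h1 : E.filter (fun e => e ⊆ S) = (S.filter (fun t => S.erase t ∈ E)).image S.erase := by
    ext e
    simp only [mem_filter, mem_image]
    constructor
    · rintro ⟨he, hs⟩
      have h3 := hE e he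
      have : (S \ e).card = 1 := by rw [card_sdiff_of_subset hs]; omega
      obtain ⟨t, ht⟩ := card_eq_one.1 this
      have htS : t ∈ S \ e := by rw [ht]; simp
      have : S.erase t = e := by
        rw [← sdiff_singleton_eq_erase, ← ht, Finset.sdiff_sdiff_eq_self hs]
      exact ⟨t, ⟨(mem_sdiff.1 htS).1, by rwa [this]⟩, this⟩
    · rintro ⟨t, ⟨_, h⟩, rfl⟩
      exact ⟨h, erase_subset _ _⟩
  rw [h1, card_image_of_injOn, card_filter, hS]
  · rw [sum_insert (by simp [*]), sum_insert (by simp [*]), sum_insert (by simp [*]), sum_singleton]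
    have e1 : ({a, b, c, d} : Finset V).erase a = {b, c, d} := by ext; simp; grind
    have e2 : ({a, b, c, d} : Finset V).erase b = {a, c, d} := by ext; simp; grind
    have e3 : ({a, b, c, d} : Finset V).erase c = {a, b, d} := by ext; simp; grind
    have e4 : ({a, b, c, d} : Finset V).erase d = {a, b, c} := by ext; simp; grind
    rw [e1, e2, e3, e4]
  · intro p hp q hq h
    exact S.erase_injOn (by simp at hp; exact hp.1) (by simp at hq; exact hq.1) h

/-- ordered count of edges of type XXY -/
def hsA {V : Type} [DecidableEq V] (E : Finset (Finset V)) (X Y : Finset V) : Finset ((V × V) × V) :=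
  (X.offDiag ×ˢ Y).filter (fun q => ({q.1.1, q.1.2, q.2} : Finset V) ∈ E)

lemma hs_A {V : Type} [DecidableEq V] (E : Finset (Finset V)) (hE : ∀ e ∈ E, e.card = 3)
    (X Y : Finset V) (h : Disjoint X Y) : (hsA E X Y).card = 2 * eXXY E X Y := by
  have hne : ∀ a ∈ X, ∀ b ∈ Y, a ≠ b := fun a ha b hb => disjoint_iff_ne.1 h a ha b hb
  unfold eXXY
  rw [mul_comm, Finset.card_eq_sum_card_fiberwise
    (f := fun q : (V × V) × V => ({q.1.1, q.1.2, q.2} : Finset V))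
    (t := E.filter (fun e => (e ∩ X).card = 2 ∧ (e ∩ Y).card = 1))]
  · apply sum_const_nat
    intro e he
    rw [mem_filter] at he
    obtain ⟨heE, h2, h1⟩ := he
    obtain ⟨p, q, hpq, hX⟩ := card_eq_two.1 h2
    obtain ⟨r, hY⟩ := card_eq_one.1 h1
    have hp : p ∈ e ∩ X := by rw [hX]; simp
    have hq : q ∈ e ∩ X := by rw [hX]; simp
    have hr : r ∈ e ∩ Y := by rw [hY]; simp
    rw [mem_inter] at hp hq hr
    have hpr := hne p hp.2 r hr.2
    have hqr := hne q hq.2 r hr.2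
    have he : ({p, q, r} : Finset V) = e := by
      apply eq_of_subset_of_card_le
      · intro t; simp; rintro (rfl | rfl | rfl)
        exacts [hp.1, hq.1, hr.1]
      · rw [hE e heE, card_eq_three.2 ⟨p, q, r, hpq, hpr, hqr, rfl⟩]
    have : (hsA E X Y).filter (fun q => ({q.1.1, q.1.2, q.2} : Finset V) = e)
        = {((p, q), r), ((q, p), r)} := by
      ext ⟨⟨a, b⟩, c⟩
      simp only [hsA, mem_filter, mem_product, mem_offDiag, mem_insert, mem_singleton,
        Prod.mk.injEq]
      constructor
      · rintro ⟨⟨⟨⟨ha, hb, hab⟩, hc⟩, -⟩, rfl⟩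
        have ha' : a ∈ ({a, b, c} : Finset V) ∩ X := by simp [ha]
        have hb' : b ∈ ({a, b, c} : Finset V) ∩ X := by simp [hb]
        have hc' : c ∈ ({a, b, c} : Finset V) ∩ Y := by simp [hc]
        rw [hX] at ha' hb'
        rw [hY] at hc'
        simp only [mem_insert, mem_singleton] at ha' hb' hc'
        grind
      · rintro (⟨⟨rfl, rfl⟩, rfl⟩ | ⟨⟨rfl, rfl⟩, rfl⟩)
        · exact ⟨⟨⟨⟨hp.2, hq.2, hpq⟩, hr.2⟩, by rwa [he]⟩, he⟩
        · rw [insert_comm]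
          exact ⟨⟨⟨⟨hq.2, hp.2, hpq.symm⟩, hr.2⟩, by rwa [he]⟩, he⟩
    rw [this, card_pair]
    simp [hpq]
  · rintro ⟨⟨a, b⟩, c⟩ hq
    simp only [hsA, coe_filter, mem_product, mem_offDiag, Set.mem_ofPred_eq] at hq ⊢
    obtain ⟨⟨⟨ha, hb, hab⟩, hc⟩, hE⟩ := hq
    refine ⟨hE, ?_, ?_⟩
    · rw [card_eq_two]
      refine ⟨a, b, hab, ?_⟩
      ext t
      simp only [mem_inter, mem_insert, mem_singleton]
      grind
    · rw [card_eq_one]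
      refine ⟨c, ?_⟩
      ext t
      simp only [mem_inter, mem_insert, mem_singleton]
      grind

lemma hs_offDiag {V : Type} [DecidableEq V] (X : Finset V) :
    (X.offDiag.card : ℝ) = X.card * (X.card - 1) := by
  rw [offDiag_card, Nat.cast_sub (Nat.le_mul_self _)]
  push_cast; ring

lemma hs_d {V : Type} [DecidableEq V] (E : Finset (Finset V)) (hE : ∀ e ∈ E, e.card = 3)
    (X Y : Finset V) (h : Disjoint X Y) :
    dXXY E X Y = ((hsA E X Y).card : ℝ) / (X.card * (X.card - 1) * Y.card) := by
  rw [hs_A E hE X Y h, dXXY, Nat.cast_choose_two]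
  push_cast
  rw [show (X.card : ℝ) * (X.card - 1) * Y.card = 2 * (X.card * (X.card - 1) / 2 * Y.card) by ring,
    mul_div_mul_left _ _ (by norm_num)]

lemma hs_A_le {V : Type} [DecidableEq V] (E : Finset (Finset V)) (X Y : Finset V) :
    ((hsA E X Y).card : ℝ) ≤ X.card * (X.card - 1) * Y.card := by
  rw [← hs_offDiag, ← Nat.cast_mul, ← card_product]
  exact_mod_cast card_filter_le _ _

lemma hs_caseB {V : Type} [Fintype V] [DecidableEq V]
    (E : Finset (Finset V)) (hE : ∀ e ∈ E, e.card = 3)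
    (γ : ℝ) (hγ : 0 < γ) (X Y : Finset V) (hXY : Disjoint X Y)
    (hX : 2 ≤ γ * X.card) (hY : 2 ≤ (Y.card : ℝ))
    (h1 : ((hsA E X Y).card : ℝ) ≤ γ ^ 2 / 8 * (X.card * (X.card - 1) * Y.card))
    (h2 : γ * (Y.card * (Y.card - 1) * X.card) ≤ ((hsA E Y X).card : ℝ)) :
    γ ^ 2 / 32 * ((X.card : ℝ) ^ 2 * (Y.card : ℝ) ^ 2) ≤ inducedD2Count E := by
  have hne : ∀ a ∈ X, ∀ b ∈ Y, a ≠ b := fun a ha b hb => disjoint_iff_ne.1 hXY a ha b hb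
  let D : V × V → Finset V := fun p => X.filter (fun a => ({p.1, p.2, a} : Finset V) ∈ E)
  have hA : (hsA E Y X).card = ∑ p ∈ Y.offDiag, (D p).card := by
    simp only [hsA, D, card_filter, sum_product]
  let R : Finset ((V × V) × (V × V)) := (Y.offDiag ×ˢ X.offDiag).filter
    (fun q => ({q.1.1, q.1.2, q.2.1} : Finset V) ∈ E ∧ ({q.1.1, q.1.2, q.2.2} : Finset V) ∈ E)
  have hR : R.card = ∑ p ∈ Y.offDiag, (D p).offDiag.card := by
    have : ∀ p, (D p).offDiag = X.offDiag.filter (fun q =>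
      ({p.1, p.2, q.1} : Finset V) ∈ E ∧ ({p.1, p.2, q.2} : Finset V) ∈ E) := by
      intro p; ext q; simp only [D, mem_offDiag, mem_filter]; tauto
    simp only [R, this, card_filter, sum_product]
  set t : ℝ := γ * X.card with ht
  set M : ℝ := Y.card * (Y.card - 1) with hM
  have hM0 : 0 ≤ M := by rw [hM]; nlinarith
  have hRlow : t ^ 2 / 2 * M ≤ R.card := by
    rw [hR]
    push_cast
    have : ∑ p ∈ Y.offDiag, ((2 * t - 1) * ((D p).card : ℝ) - t ^ 2) ≤
        ∑ p ∈ Y.offDiag, ((D p).offDiag.card : ℝ) := by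
      apply sum_le_sum
      intro p _
      rw [hs_offDiag]
      nlinarith [sq_nonneg (((D p).card : ℝ) - t)]
    rw [sum_sub_distrib, ← mul_sum, sum_const, nsmul_eq_mul, hs_offDiag, ← hM,
      ← Nat.cast_sum, ← hA] at this
    have h2' : t * M ≤ ((hsA E Y X).card : ℝ) := by rw [ht, hM]; linarith
    have : (2 * t - 1) * (t * M) ≤ (2 * t - 1) * ((hsA E Y X).card : ℝ) :=
      mul_le_mul_of_nonneg_left h2' (by linarith)
    have : 0 ≤ (t * (t - 2)) * M := mul_nonneg (mul_nonneg (by linarith) (by linarith)) hM0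
    nlinarith
  -- bad
  let B1 := R.filter (fun q => ({q.2.1, q.2.2, q.1.1} : Finset V) ∈ E)
  let B2 := R.filter (fun q => ({q.2.1, q.2.2, q.1.2} : Finset V) ∈ E)
  let G := R.filter (fun q => ({q.2.1, q.2.2, q.1.1} : Finset V) ∉ E ∧
    ({q.2.1, q.2.2, q.1.2} : Finset V) ∉ E)
  have hcov : R ⊆ (B1 ∪ B2) ∪ G := by
    intro q hq
    simp only [B1, B2, G, mem_union, mem_filter, hq]
    tauto
  have hcard : R.card ≤ B1.card + B2.card + G.card :=
    (card_le_card hcov).trans ((card_union_le _ _).trans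
      (Nat.add_le_add_right (card_union_le _ _) _))
  have hB1 : B1.card ≤ (Y.card - 1) * (hsA E X Y).card := by
    apply hs_card_le _ _ (fun q => (q.2, q.1.1))
    · rintro ⟨⟨c, d⟩, ⟨a, b⟩⟩ h
      simp only [B1, R, hsA, mem_filter, mem_product, mem_offDiag] at h ⊢
      tauto
    · rintro ⟨⟨c, d⟩, ⟨a, b⟩⟩ h
      simp only [B1, R, mem_filter, mem_product, mem_offDiag] at h
      refine ⟨({c} ×ˢ Y.erase c) ×ˢ {(a, b)}, ?_, ?_⟩
      · simp only [card_product, card_singleton, card_erase_of_mem h.1.1.1.1]; omega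
      · rintro ⟨⟨c', d'⟩, ⟨a', b'⟩⟩ h'
        simp only [B1, R, mem_filter, mem_product, mem_offDiag] at h'
        simp only [mem_product, mem_singleton, mem_erase, Prod.mk.injEq]
        rintro ⟨⟨rfl, rfl⟩, rfl⟩
        grind
  have hB2 : B2.card ≤ (Y.card - 1) * (hsA E X Y).card := by
    apply hs_card_le _ _ (fun q => (q.2, q.1.2))
    · rintro ⟨⟨c, d⟩, ⟨a, b⟩⟩ h
      simp only [B2, R, hsA, mem_filter, mem_product, mem_offDiag] at h ⊢
      tauto
    · rintro ⟨⟨c, d⟩, ⟨a, b⟩⟩ h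
      simp only [B2, R, mem_filter, mem_product, mem_offDiag] at h
      refine ⟨(Y.erase d ×ˢ {d}) ×ˢ {(a, b)}, ?_, ?_⟩
      · simp only [card_product, card_singleton, card_erase_of_mem h.1.1.1.2.1]; omega
      · rintro ⟨⟨c', d'⟩, ⟨a', b'⟩⟩ h'
        simp only [B2, R, mem_filter, mem_product, mem_offDiag] at h'
        simp only [mem_product, mem_singleton, mem_erase, Prod.mk.injEq]
        rintro ⟨⟨rfl, rfl⟩, rfl⟩
        grind
  have hG : G.card ≤ 4 * inducedD2Count E := by
    apply hs_card_le _ _ (fun q => ({q.1.1, q.1.2, q.2.1, q.2.2} : Finset V))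
    · rintro ⟨⟨c, d⟩, ⟨a, b⟩⟩ h
      simp only [G, R, mem_filter, mem_product, mem_offDiag] at h
      obtain ⟨⟨⟨⟨hc, hd, hcd⟩, ⟨ha, hb, hab⟩⟩, e1, e2⟩, n1, n2⟩ := h
      have hca := (hne a ha c hc).symm
      have hda := (hne a ha d hd).symm
      have hcb := (hne b hb c hc).symm
      have hdb := (hne b hb d hd).symm
      simp only [mem_filter, mem_powersetCard_univ]
      refine ⟨by simp [*], ?_⟩
      rw [hs_count E hE c d a b hcd hca hcb hda hdb hab]
      have m1 : ({c, a, b} : Finset V) ∉ E := by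
        have : ({c, a, b} : Finset V) = {a, b, c} := by ext; simp; tauto
        rwa [this]
      have m2 : ({d, a, b} : Finset V) ∉ E := by
        have : ({d, a, b} : Finset V) = {a, b, d} := by ext; simp; tauto
        rwa [this]
      simp [*]
    · rintro ⟨⟨c, d⟩, ⟨a, b⟩⟩ h
      simp only [G, R, mem_filter, mem_product, mem_offDiag] at h
      refine ⟨({(c, d), (d, c)} : Finset (V × V)) ×ˢ ({(a, b), (b, a)} : Finset (V × V)), ?_, ?_⟩
      · rw [card_product]
        exact Nat.mul_le_mul card_le_two card_le_two
      · rintro ⟨⟨c', d'⟩, ⟨a', b'⟩⟩ h' heq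
        simp only [G, R, mem_filter, mem_product, mem_offDiag] at h'
        obtain ⟨⟨⟨⟨hc, hd, hcd⟩, ⟨ha, hb, hab⟩⟩, -⟩, -⟩ := h
        obtain ⟨⟨⟨⟨hc', hd', hcd'⟩, ⟨ha', hb', hab'⟩⟩, -⟩, -⟩ := h'
        have k1 : c' ∈ ({c, d, a, b} : Finset V) := by rw [← heq]; simp
        have k2 : d' ∈ ({c, d, a, b} : Finset V) := by rw [← heq]; simp
        have k3 : a' ∈ ({c, d, a, b} : Finset V) := by rw [← heq]; simp
        have k4 : b' ∈ ({c, d, a, b} : Finset V) := by rw [← heq]; simp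
        clear heq
        simp only [mem_insert, mem_singleton, mem_product, Prod.mk.injEq] at *
        grind
  have hY1 : 1 ≤ Y.card := by
    have : (1 : ℝ) ≤ Y.card := by linarith
    exact_mod_cast this
  have hB1' : (B1.card : ℝ) ≤ (Y.card - 1) * (hsA E X Y).card := by
    have : (B1.card : ℝ) ≤ ((Y.card - 1 : ℕ) : ℝ) * (hsA E X Y).card := by exact_mod_cast hB1
    rwa [Nat.cast_sub hY1, Nat.cast_one] at this
  have hB2' : (B2.card : ℝ) ≤ (Y.card - 1) * (hsA E X Y).card := by
    have : (B2.card : ℝ) ≤ ((Y.card - 1 : ℕ) : ℝ) * (hsA E X Y).card := by exact_mod_cast hB2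
    rwa [Nat.cast_sub hY1, Nat.cast_one] at this
  have hG' : (G.card : ℝ) ≤ 4 * inducedD2Count E := by exact_mod_cast hG
  have hcard' : (R.card : ℝ) ≤ B1.card + B2.card + G.card := by exact_mod_cast hcard
  have k1 : ((Y.card : ℝ) - 1) * (hsA E X Y).card ≤
      (Y.card - 1) * (γ ^ 2 / 8 * (X.card * (X.card - 1) * Y.card)) :=
    mul_le_mul_of_nonneg_left h1 (by linarith)
  have k2 : ((Y.card : ℝ) - 1) * (γ ^ 2 / 8 * (X.card * (X.card - 1) * Y.card)) ≤ t ^ 2 / 8 * M := by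
    have : 0 ≤ γ ^ 2 / 8 * (X.card * M) := by positivity
    rw [ht, hM] at *
    nlinarith
  have k3 : t ^ 2 * (Y.card ^ 2 / 2) ≤ t ^ 2 * M := by
    apply mul_le_mul_of_nonneg_left _ (sq_nonneg _)
    rw [hM]; nlinarith
  rw [ht] at *
  nlinarith

set_option maxHeartbeats 4000000 in
set_option linter.unusedSimpArgs false in
lemma hs_caseA {V : Type} [Fintype V] [DecidableEq V]
    (E : Finset (Finset V)) (hE : ∀ e ∈ E, e.card = 3)
    (γ : ℝ) (v : V) (X Y Z : Finset V)
    (hvX : v ∉ X) (hvY : v ∉ Y) (hvZ : v ∉ Z)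
    (hXY : Disjoint X Y) (hXZ : Disjoint X Z) (hYZ : Disjoint Y Z)
    (hX : 2 ≤ (X.card : ℝ))
    (hdXZ : (((X ×ˢ Z).filter (fun p => ({v, p.1, p.2} : Finset V) ∉ E)).card : ℝ)
      ≤ γ ^ 2 / 80 * (X.card * Z.card))
    (hdYZ : (((Y ×ˢ Z).filter (fun p => ({v, p.1, p.2} : Finset V) ∈ E)).card : ℝ)
      ≤ γ ^ 2 / 80 * (Y.card * Z.card))
    (hdXY : (((X ×ˢ Y).filter (fun p => ({v, p.1, p.2} : Finset V) ∈ E)).card : ℝ)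
      ≤ γ ^ 2 / 80 * (X.card * Y.card))
    (hA : γ ^ 2 / 8 * (X.card * (X.card - 1) * Y.card) ≤ ((hsA E X Y).card : ℝ)) :
    γ ^ 2 / 64 * ((X.card : ℝ) ^ 2 * Y.card * Z.card) ≤
      inducedD2Count E + (Fintype.card V : ℝ) * inducedD2CountVia E v := by
  have hxy : ∀ a ∈ X, ∀ b ∈ Y, a ≠ b := fun a ha b hb => disjoint_iff_ne.1 hXY a ha b hb
  have hxz : ∀ a ∈ X, ∀ b ∈ Z, a ≠ b := fun a ha b hb => disjoint_iff_ne.1 hXZ a ha b hb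
  have hyz : ∀ a ∈ Y, ∀ b ∈ Z, a ≠ b := fun a ha b hb => disjoint_iff_ne.1 hYZ a ha b hb
  have hvx : ∀ a ∈ X, v ≠ a := fun a ha h => hvX (h ▸ ha)
  have hvy : ∀ a ∈ Y, v ≠ a := fun a ha h => hvY (h ▸ ha)
  have hvz : ∀ a ∈ Z, v ≠ a := fun a ha h => hvZ (h ▸ ha)
  let U : Finset ((V × V) × (V × V)) := X.offDiag ×ˢ (Y ×ˢ Z)
  let Q := U.filter (fun q => ({q.1.1, q.1.2, q.2.1} : Finset V) ∈ E)
  let B1 := U.filter (fun q => ({v, q.1.1, q.2.2} : Finset V) ∉ E)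
  let B2 := U.filter (fun q => ({v, q.1.2, q.2.2} : Finset V) ∉ E)
  let B3 := U.filter (fun q => ({v, q.2.1, q.2.2} : Finset V) ∈ E)
  let B4 := U.filter (fun q => ({v, q.1.1, q.2.1} : Finset V) ∈ E)
  let B5 := U.filter (fun q => ({v, q.1.2, q.2.1} : Finset V) ∈ E)
  let G1 := U.filter (fun q => (E.filter (fun e => e ⊆ ({v, q.1.1, q.1.2, q.2.1} : Finset V))).card = 2)
  let G2 := U.filter (fun q => (E.filter (fun e => e ⊆ ({v, q.1.1, q.1.2, q.2.2} : Finset V))).card = 2)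
  let G3 := U.filter (fun q => (E.filter (fun e => e ⊆ ({v, q.1.1, q.2.1, q.2.2} : Finset V))).card = 2)
  let G4 := U.filter (fun q => (E.filter (fun e => e ⊆ ({v, q.1.2, q.2.1, q.2.2} : Finset V))).card = 2)
  let G5 := U.filter (fun q => (E.filter (fun e => e ⊆ ({q.1.1, q.1.2, q.2.1, q.2.2} : Finset V))).card = 2)
  have hQ : (hsA E X Y).card * Z.card ≤ Q.card := by
    rw [← card_product]
    apply card_le_card_of_injOn (fun r => (r.1.1, (r.1.2, r.2)))
    · rintro ⟨⟨⟨a, b⟩, y⟩, z⟩ h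
      simp only [Q, U, hsA, coe_product, Set.mem_prod, mem_coe, mem_filter, mem_product,
        mem_offDiag] at h ⊢
      tauto
    · rintro ⟨⟨⟨a, b⟩, y⟩, z⟩ _ ⟨⟨⟨a', b'⟩, y'⟩, z'⟩ _ h
      simp only [Prod.mk.injEq] at h ⊢
      tauto
  have hcov : Q ⊆ B1 ∪ B2 ∪ B3 ∪ B4 ∪ B5 ∪ G1 ∪ G2 ∪ G3 ∪ G4 ∪ G5 := by
    rintro ⟨⟨a, b⟩, ⟨y, z⟩⟩ h
    obtain ⟨hU, he⟩ := mem_filter.1 h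
    simp only [B1, B2, B3, B4, B5, G1, G2, G3, G4, G5, mem_union, mem_filter, hU, true_and]
    clear h
    simp only [U, mem_product, mem_offDiag] at hU
    obtain ⟨⟨ha, hb, hab⟩, hy, hz⟩ := hU
    rw [hs_count E hE v a b y (hvx a ha) (hvx b hb) (hvy y hy) hab (hxy a ha y hy) (hxy b hb y hy),
      hs_count E hE v a b z (hvx a ha) (hvx b hb) (hvz z hz) hab (hxz a ha z hz) (hxz b hb z hz),
      hs_count E hE v a y z (hvx a ha) (hvy y hy) (hvz z hz) (hxy a ha y hy) (hxz a ha z hz)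
        (hyz y hy z hz),
      hs_count E hE v b y z (hvx b hb) (hvy y hy) (hvz z hz) (hxy b hb y hy) (hxz b hb z hz)
        (hyz y hy z hz),
      hs_count E hE a b y z hab (hxy a ha y hy) (hxz a ha z hz) (hxy b hb y hy) (hxz b hb z hz)
        (hyz y hy z hz)]
    simp only at he
    by_cases e1 : ({v, a, z} : Finset V) ∈ E <;> simp only [e1, he, if_true, if_false, not_true, not_false_iff, true_or, false_or]
    by_cases e2 : ({v, b, z} : Finset V) ∈ E <;> simp only [e2, if_true, if_false, not_true, not_false_iff, true_or, false_or]
    by_cases e3 : ({v, y, z} : Finset V) ∈ E <;> simp only [e3, if_true, if_false, true_or, false_or]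
    by_cases e4 : ({v, a, y} : Finset V) ∈ E <;> simp only [e4, if_true, if_false, true_or, false_or]
    by_cases e5 : ({v, b, y} : Finset V) ∈ E <;> simp only [e5, if_true, if_false, true_or, false_or]
    by_cases e6 : ({v, a, b} : Finset V) ∈ E <;> simp only [e6, if_true, if_false]
    · simp
    by_cases e7 : ({a, b, z} : Finset V) ∈ E <;> simp only [e7, if_true, if_false]
    on_goal 2 => simp
    by_cases e8 : ({a, y, z} : Finset V) ∈ E <;> simp only [e8, if_true, if_false]
    · simp
    by_cases e9 : ({b, y, z} : Finset V) ∈ E <;> simp only [e9, if_true, if_false]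
    · simp
    · simp
  have hcard : Q.card ≤ B1.card + B2.card + B3.card + B4.card + B5.card + G1.card + G2.card
      + G3.card + G4.card + G5.card := by
    refine (card_le_card hcov).trans ?_
    iterate 8
      refine (card_union_le _ _).trans (Nat.add_le_add_right ?_ _)
    exact card_union_le _ _
  have hB1 : B1.card ≤ ((X.card - 1) * Y.card) * ((X ×ˢ Z).filter (fun p => ({v, p.1, p.2} : Finset V) ∉ E)).card := by
    apply hs_card_le _ _ (fun q => (q.1.1, q.2.2))
    · rintro ⟨⟨a, b⟩, ⟨y, z⟩⟩ h
      simp only [B1, U, mem_filter, mem_product, mem_offDiag] at h ⊢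
      tauto
    · rintro ⟨⟨a, b⟩, ⟨y, z⟩⟩ h
      simp only [B1, U, mem_filter, mem_product, mem_offDiag] at h
      refine ⟨({a} ×ˢ X.erase a) ×ˢ (Y ×ˢ {z}), ?_, ?_⟩
      · simp only [card_product, card_singleton, mul_one, one_mul, card_erase_of_mem h.1.1.1]
        exact le_rfl
      · rintro ⟨⟨a', b'⟩, ⟨y', z'⟩⟩ h'
        simp only [B1, U, mem_filter, mem_product, mem_offDiag] at h'
        simp only [mem_product, mem_singleton, mem_erase, Prod.mk.injEq, mem_offDiag]
        rintro ⟨rfl, rfl⟩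
        grind
  have hB2 : B2.card ≤ ((X.card - 1) * Y.card) * ((X ×ˢ Z).filter (fun p => ({v, p.1, p.2} : Finset V) ∉ E)).card := by
    apply hs_card_le _ _ (fun q => (q.1.2, q.2.2))
    · rintro ⟨⟨a, b⟩, ⟨y, z⟩⟩ h
      simp only [B2, U, mem_filter, mem_product, mem_offDiag] at h ⊢
      tauto
    · rintro ⟨⟨a, b⟩, ⟨y, z⟩⟩ h
      simp only [B2, U, mem_filter, mem_product, mem_offDiag] at h
      refine ⟨(X.erase b ×ˢ {b}) ×ˢ (Y ×ˢ {z}), ?_, ?_⟩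
      · simp only [card_product, card_singleton, mul_one, one_mul, card_erase_of_mem h.1.1.2.1]
        exact le_rfl
      · rintro ⟨⟨a', b'⟩, ⟨y', z'⟩⟩ h'
        simp only [B2, U, mem_filter, mem_product, mem_offDiag] at h'
        simp only [mem_product, mem_singleton, mem_erase, Prod.mk.injEq, mem_offDiag]
        rintro ⟨rfl, rfl⟩
        grind
  have hB3 : B3.card ≤ X.offDiag.card * ((Y ×ˢ Z).filter (fun p => ({v, p.1, p.2} : Finset V) ∈ E)).card := by
    apply hs_card_le _ _ (fun q => (q.2.1, q.2.2))
    · rintro ⟨⟨a, b⟩, ⟨y, z⟩⟩ h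
      simp only [B3, U, mem_filter, mem_product, mem_offDiag] at h ⊢
      tauto
    · rintro ⟨⟨a, b⟩, ⟨y, z⟩⟩ h
      simp only [B3, U, mem_filter, mem_product, mem_offDiag] at h
      refine ⟨X.offDiag ×ˢ ({y} ×ˢ {z}), ?_, ?_⟩
      · simp only [card_product, card_singleton, mul_one, one_mul]
        exact le_rfl
      · rintro ⟨⟨a', b'⟩, ⟨y', z'⟩⟩ h'
        simp only [B3, U, mem_filter, mem_product, mem_offDiag] at h'
        simp only [mem_product, mem_singleton, mem_erase, Prod.mk.injEq, mem_offDiag]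
        rintro ⟨rfl, rfl⟩
        grind
  have hB4 : B4.card ≤ ((X.card - 1) * Z.card) * ((X ×ˢ Y).filter (fun p => ({v, p.1, p.2} : Finset V) ∈ E)).card := by
    apply hs_card_le _ _ (fun q => (q.1.1, q.2.1))
    · rintro ⟨⟨a, b⟩, ⟨y, z⟩⟩ h
      simp only [B4, U, mem_filter, mem_product, mem_offDiag] at h ⊢
      tauto
    · rintro ⟨⟨a, b⟩, ⟨y, z⟩⟩ h
      simp only [B4, U, mem_filter, mem_product, mem_offDiag] at h
      refine ⟨({a} ×ˢ X.erase a) ×ˢ ({y} ×ˢ Z), ?_, ?_⟩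
      · simp only [card_product, card_singleton, mul_one, one_mul, card_erase_of_mem h.1.1.1]
        exact le_rfl
      · rintro ⟨⟨a', b'⟩, ⟨y', z'⟩⟩ h'
        simp only [B4, U, mem_filter, mem_product, mem_offDiag] at h'
        simp only [mem_product, mem_singleton, mem_erase, Prod.mk.injEq, mem_offDiag]
        rintro ⟨rfl, rfl⟩
        grind
  have hB5 : B5.card ≤ ((X.card - 1) * Z.card) * ((X ×ˢ Y).filter (fun p => ({v, p.1, p.2} : Finset V) ∈ E)).card := by
    apply hs_card_le _ _ (fun q => (q.1.2, q.2.1))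
    · rintro ⟨⟨a, b⟩, ⟨y, z⟩⟩ h
      simp only [B5, U, mem_filter, mem_product, mem_offDiag] at h ⊢
      tauto
    · rintro ⟨⟨a, b⟩, ⟨y, z⟩⟩ h
      simp only [B5, U, mem_filter, mem_product, mem_offDiag] at h
      refine ⟨(X.erase b ×ˢ {b}) ×ˢ ({y} ×ˢ Z), ?_, ?_⟩
      · simp only [card_product, card_singleton, mul_one, one_mul, card_erase_of_mem h.1.1.2.1]
        exact le_rfl
      · rintro ⟨⟨a', b'⟩, ⟨y', z'⟩⟩ h'
        simp only [B5, U, mem_filter, mem_product, mem_offDiag] at h'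
        simp only [mem_product, mem_singleton, mem_erase, Prod.mk.injEq, mem_offDiag]
        rintro ⟨rfl, rfl⟩
        grind
  have hG1 : G1.card ≤ (2 * Z.card) * inducedD2CountVia E v := by
    apply hs_card_le _ _ (fun q => ({v, q.1.1, q.1.2, q.2.1} : Finset V))
    · rintro ⟨⟨a, b⟩, ⟨y, z⟩⟩ h
      simp only [G1, U, mem_filter, mem_product, mem_offDiag] at h
      obtain ⟨⟨⟨ha, hb, hab⟩, hy, hz⟩, hc⟩ := h
      simp only [mem_filter, mem_powersetCard_univ]
      refine ⟨?_, by simp, hc⟩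
      have := hvx a ha
      have := hvx b hb
      have := hvy y hy
      have := hvz z hz
      have := hxy a ha y hy
      have := hxy b hb y hy
      have := hxz a ha z hz
      have := hxz b hb z hz
      have := hyz y hy z hz
      simp [*]
    · rintro ⟨⟨a, b⟩, ⟨y, z⟩⟩ h
      simp only [G1, U, mem_filter, mem_product, mem_offDiag] at h
      refine ⟨({(a, b), (b, a)} : Finset (V × V)) ×ˢ ({y} ×ˢ Z), ?_, ?_⟩
      · simp only [card_product, card_singleton, mul_one, one_mul]
        first
          | exact le_rfl
          | exact Nat.mul_le_mul_right _ card_le_two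
      · rintro ⟨⟨a', b'⟩, ⟨y', z'⟩⟩ h' heq
        simp only [G1, U, mem_filter, mem_product, mem_offDiag] at h'
        obtain ⟨⟨⟨ha, hb, hab⟩, hy, hz⟩, -⟩ := h
        obtain ⟨⟨⟨ha', hb', hab'⟩, hy', hz'⟩, -⟩ := h'
        have k0 : a' ∈ ({v, a, b, y} : Finset V) := by rw [← heq]; simp
        have k1 : b' ∈ ({v, a, b, y} : Finset V) := by rw [← heq]; simp
        have k2 : y' ∈ ({v, a, b, y} : Finset V) := by rw [← heq]; simp
        clear heq
        simp only [mem_insert, mem_singleton, mem_product, Prod.mk.injEq] at *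
        grind
  have hG2 : G2.card ≤ (2 * Y.card) * inducedD2CountVia E v := by
    apply hs_card_le _ _ (fun q => ({v, q.1.1, q.1.2, q.2.2} : Finset V))
    · rintro ⟨⟨a, b⟩, ⟨y, z⟩⟩ h
      simp only [G2, U, mem_filter, mem_product, mem_offDiag] at h
      obtain ⟨⟨⟨ha, hb, hab⟩, hy, hz⟩, hc⟩ := h
      simp only [mem_filter, mem_powersetCard_univ]
      refine ⟨?_, by simp, hc⟩
      have := hvx a ha
      have := hvx b hb
      have := hvy y hy
      have := hvz z hz
      have := hxy a ha y hy
      have := hxy b hb y hy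
      have := hxz a ha z hz
      have := hxz b hb z hz
      have := hyz y hy z hz
      simp [*]
    · rintro ⟨⟨a, b⟩, ⟨y, z⟩⟩ h
      simp only [G2, U, mem_filter, mem_product, mem_offDiag] at h
      refine ⟨({(a, b), (b, a)} : Finset (V × V)) ×ˢ (Y ×ˢ {z}), ?_, ?_⟩
      · simp only [card_product, card_singleton, mul_one, one_mul]
        first
          | exact le_rfl
          | exact Nat.mul_le_mul_right _ card_le_two
      · rintro ⟨⟨a', b'⟩, ⟨y', z'⟩⟩ h' heq
        simp only [G2, U, mem_filter, mem_product, mem_offDiag] at h'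
        obtain ⟨⟨⟨ha, hb, hab⟩, hy, hz⟩, -⟩ := h
        obtain ⟨⟨⟨ha', hb', hab'⟩, hy', hz'⟩, -⟩ := h'
        have k0 : a' ∈ ({v, a, b, z} : Finset V) := by rw [← heq]; simp
        have k1 : b' ∈ ({v, a, b, z} : Finset V) := by rw [← heq]; simp
        have k2 : z' ∈ ({v, a, b, z} : Finset V) := by rw [← heq]; simp
        clear heq
        simp only [mem_insert, mem_singleton, mem_product, Prod.mk.injEq] at *
        grind
  have hG3 : G3.card ≤ X.card * inducedD2CountVia E v := by
    apply hs_card_le _ _ (fun q => ({v, q.1.1, q.2.1, q.2.2} : Finset V))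
    · rintro ⟨⟨a, b⟩, ⟨y, z⟩⟩ h
      simp only [G3, U, mem_filter, mem_product, mem_offDiag] at h
      obtain ⟨⟨⟨ha, hb, hab⟩, hy, hz⟩, hc⟩ := h
      simp only [mem_filter, mem_powersetCard_univ]
      refine ⟨?_, by simp, hc⟩
      have := hvx a ha
      have := hvx b hb
      have := hvy y hy
      have := hvz z hz
      have := hxy a ha y hy
      have := hxy b hb y hy
      have := hxz a ha z hz
      have := hxz b hb z hz
      have := hyz y hy z hz
      simp [*]
    · rintro ⟨⟨a, b⟩, ⟨y, z⟩⟩ h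
      simp only [G3, U, mem_filter, mem_product, mem_offDiag] at h
      refine ⟨({a} ×ˢ X) ×ˢ ({y} ×ˢ {z}), ?_, ?_⟩
      · simp only [card_product, card_singleton, mul_one, one_mul]
        first
          | exact le_rfl
          | exact Nat.mul_le_mul_right _ card_le_two
      · rintro ⟨⟨a', b'⟩, ⟨y', z'⟩⟩ h' heq
        simp only [G3, U, mem_filter, mem_product, mem_offDiag] at h'
        obtain ⟨⟨⟨ha, hb, hab⟩, hy, hz⟩, -⟩ := h
        obtain ⟨⟨⟨ha', hb', hab'⟩, hy', hz'⟩, -⟩ := h'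
        have k0 : a' ∈ ({v, a, y, z} : Finset V) := by rw [← heq]; simp
        have k1 : y' ∈ ({v, a, y, z} : Finset V) := by rw [← heq]; simp
        have k2 : z' ∈ ({v, a, y, z} : Finset V) := by rw [← heq]; simp
        clear heq
        simp only [mem_insert, mem_singleton, mem_product, Prod.mk.injEq] at *
        grind
  have hG4 : G4.card ≤ X.card * inducedD2CountVia E v := by
    apply hs_card_le _ _ (fun q => ({v, q.1.2, q.2.1, q.2.2} : Finset V))
    · rintro ⟨⟨a, b⟩, ⟨y, z⟩⟩ h
      simp only [G4, U, mem_filter, mem_product, mem_offDiag] at h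
      obtain ⟨⟨⟨ha, hb, hab⟩, hy, hz⟩, hc⟩ := h
      simp only [mem_filter, mem_powersetCard_univ]
      refine ⟨?_, by simp, hc⟩
      have := hvx a ha
      have := hvx b hb
      have := hvy y hy
      have := hvz z hz
      have := hxy a ha y hy
      have := hxy b hb y hy
      have := hxz a ha z hz
      have := hxz b hb z hz
      have := hyz y hy z hz
      simp [*]
    · rintro ⟨⟨a, b⟩, ⟨y, z⟩⟩ h
      simp only [G4, U, mem_filter, mem_product, mem_offDiag] at h
      refine ⟨(X ×ˢ {b}) ×ˢ ({y} ×ˢ {z}), ?_, ?_⟩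
      · simp only [card_product, card_singleton, mul_one, one_mul]
        first
          | exact le_rfl
          | exact Nat.mul_le_mul_right _ card_le_two
      · rintro ⟨⟨a', b'⟩, ⟨y', z'⟩⟩ h' heq
        simp only [G4, U, mem_filter, mem_product, mem_offDiag] at h'
        obtain ⟨⟨⟨ha, hb, hab⟩, hy, hz⟩, -⟩ := h
        obtain ⟨⟨⟨ha', hb', hab'⟩, hy', hz'⟩, -⟩ := h'
        have k0 : b' ∈ ({v, b, y, z} : Finset V) := by rw [← heq]; simp
        have k1 : y' ∈ ({v, b, y, z} : Finset V) := by rw [← heq]; simp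
        have k2 : z' ∈ ({v, b, y, z} : Finset V) := by rw [← heq]; simp
        clear heq
        simp only [mem_insert, mem_singleton, mem_product, Prod.mk.injEq] at *
        grind
  have hG5 : G5.card ≤ 2 * inducedD2Count E := by
    apply hs_card_le _ _ (fun q => ({q.1.1, q.1.2, q.2.1, q.2.2} : Finset V))
    · rintro ⟨⟨a, b⟩, ⟨y, z⟩⟩ h
      simp only [G5, U, mem_filter, mem_product, mem_offDiag] at h
      obtain ⟨⟨⟨ha, hb, hab⟩, hy, hz⟩, hc⟩ := h
      simp only [mem_filter, mem_powersetCard_univ]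
      refine ⟨?_, hc⟩
      have := hvx a ha
      have := hvx b hb
      have := hvy y hy
      have := hvz z hz
      have := hxy a ha y hy
      have := hxy b hb y hy
      have := hxz a ha z hz
      have := hxz b hb z hz
      have := hyz y hy z hz
      simp [*]
    · rintro ⟨⟨a, b⟩, ⟨y, z⟩⟩ h
      simp only [G5, U, mem_filter, mem_product, mem_offDiag] at h
      refine ⟨({(a, b), (b, a)} : Finset (V × V)) ×ˢ ({y} ×ˢ {z}), ?_, ?_⟩
      · simp only [card_product, card_singleton, mul_one, one_mul]
        first
          | exact le_rfl
          | exact card_le_two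
      · rintro ⟨⟨a', b'⟩, ⟨y', z'⟩⟩ h' heq
        simp only [G5, U, mem_filter, mem_product, mem_offDiag] at h'
        obtain ⟨⟨⟨ha, hb, hab⟩, hy, hz⟩, -⟩ := h
        obtain ⟨⟨⟨ha', hb', hab'⟩, hy', hz'⟩, -⟩ := h'
        have k0 : a' ∈ ({a, b, y, z} : Finset V) := by rw [← heq]; simp
        have k1 : b' ∈ ({a, b, y, z} : Finset V) := by rw [← heq]; simp
        have k2 : y' ∈ ({a, b, y, z} : Finset V) := by rw [← heq]; simp
        have k3 : z' ∈ ({a, b, y, z} : Finset V) := by rw [← heq]; simp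
        clear heq
        simp only [mem_insert, mem_singleton, mem_product, Prod.mk.injEq] at *
        grind
  have hn : (X.card : ℝ) + Y.card + Z.card ≤ Fintype.card V := by
    have h1 : (X ∪ Y ∪ Z).card = X.card + Y.card + Z.card := by
      rw [card_union_of_disjoint, card_union_of_disjoint hXY]
      exact disjoint_union_left.2 ⟨hXZ, hYZ⟩
    have h2 := card_le_univ (X ∪ Y ∪ Z)
    rw [h1] at h2
    exact_mod_cast h2
  have hX1 : 1 ≤ X.card := by
    have : (1 : ℝ) ≤ X.card := by linarith
    exact_mod_cast this
  have c0 : ((hsA E X Y).card : ℝ) * Z.card ≤ B1.card + B2.card + B3.card + B4.card + B5.card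
      + G1.card + G2.card + G3.card + G4.card + G5.card := by exact_mod_cast hQ.trans hcard
  rify [hX1] at hB1 hB2 hB3 hB4 hB5 hG1 hG2 hG3 hG4 hG5
  rw [hs_offDiag] at hB3
  have hx0 : (0 : ℝ) ≤ X.card - 1 := by linarith
  have hy0 : (0 : ℝ) ≤ Y.card := by positivity
  have hz0 : (0 : ℝ) ≤ Z.card := by positivity
  have m1 := mul_le_mul_of_nonneg_left hdXZ (mul_nonneg hx0 hy0)
  have m3 := mul_le_mul_of_nonneg_left hdYZ (mul_nonneg (by linarith : (0 : ℝ) ≤ X.card) hx0)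
  have m4 := mul_le_mul_of_nonneg_left hdXY (mul_nonneg hx0 hz0)
  have mA := mul_le_mul_of_nonneg_right hA hz0
  have mn := mul_le_mul_of_nonneg_right hn (Nat.cast_nonneg (α := ℝ) (inducedD2CountVia E v))
  have ml : γ ^ 2 * Y.card * Z.card * (X.card ^ 2 / 2) ≤
      γ ^ 2 * Y.card * Z.card * (X.card * (X.card - 1)) := by
    apply mul_le_mul_of_nonneg_left _ (by positivity)
    nlinarith
  linarith

theorem homogeneous_sparse {V : Type} [Fintype V] [DecidableEq V]
    (E : Finset (Finset V)) (hE : ∀ e ∈ E, e.card = 3)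
    (γ : ℝ) (hγ : 0 < γ) (v : V) (X Y Z : Finset V)
    (hvX : v ∉ X) (hvY : v ∉ Y) (hvZ : v ∉ Z)
    (hXY : Disjoint X Y) (hXZ : Disjoint X Z) (hYZ : Disjoint Y Z)
    (hX : (X.card : ℝ) ≥ 2 / γ) (hY : (Y.card : ℝ) ≥ 2 / γ)
    (hdXZ : dLink E v X Z ≥ 1 - γ ^ 2 / 80)
    (hdYZ : dLink E v Y Z ≤ γ ^ 2 / 80)
    (hdXY : dLink E v X Y ≤ γ ^ 2 / 80) :
    (dXXY E X Y ≤ γ ∧ dXXY E Y X ≤ γ) ∨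
    (inducedD2Count E : ℝ) ≥ γ ^ 2 / 128 *
      min (min ((X.card : ℝ) ^ 2 * (Y.card : ℝ) * (Z.card : ℝ))
               ((X.card : ℝ) * (Y.card : ℝ) ^ 2 * (Z.card : ℝ)))
          ((X.card : ℝ) ^ 2 * (Y.card : ℝ) ^ 2) ∨
    (inducedD2CountVia E v : ℝ) ≥ γ ^ 2 / 128 * (1 / (Fintype.card V : ℝ)) *
      min ((X.card : ℝ) ^ 2 * (Y.card : ℝ) * (Z.card : ℝ))
          ((X.card : ℝ) * (Y.card : ℝ) ^ 2 * (Z.card : ℝ)) := by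
  by_cases hγ1 : (dXXY E X Y ≤ γ ∧ dXXY E Y X ≤ γ)
  · exact Or.inl hγ1
  right
  by_cases hZ : Z.card = 0
  · left
    simp only [hZ, Nat.cast_zero, mul_zero, min_self]
    rw [min_eq_left (by positivity)]
    simp
  have hZ0 : (0 : ℝ) < Z.card := by exact_mod_cast Nat.pos_of_ne_zero hZ
  have h2γ : 0 < 2 / γ := by positivity
  have hX0 : (0 : ℝ) < X.card := lt_of_lt_of_le h2γ hX
  have hY0 : (0 : ℝ) < Y.card := lt_of_lt_of_le h2γ hY
  have hle1 : ∀ A B : Finset V, Disjoint A B → dXXY E A B ≤ 1 := by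
    intro A B h
    rw [hs_d E hE A B h]
    exact div_le_one_of_le₀ (hs_A_le E A B) (le_trans (Nat.cast_nonneg _) (hs_A_le E A B))
  have hγlt : γ ≤ 1 := by
    by_contra hcon
    exact hγ1 ⟨(hle1 X Y hXY).trans (by linarith), (hle1 Y X hXY.symm).trans (by linarith)⟩
  have hX' : 2 ≤ γ * X.card := by
    rw [ge_iff_le, div_le_iff₀ hγ] at hX; linarith
  have hY' : 2 ≤ γ * Y.card := by
    rw [ge_iff_le, div_le_iff₀ hγ] at hY; linarith
  have hX2 : 2 ≤ (X.card : ℝ) := by nlinarith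
  have hY2 : 2 ≤ (Y.card : ℝ) := by nlinarith
  have hpx : 0 < (X.card : ℝ) * (X.card - 1) * Y.card :=
    mul_pos (mul_pos hX0 (by linarith)) hY0
  have hpy : 0 < (Y.card : ℝ) * (Y.card - 1) * X.card :=
    mul_pos (mul_pos hY0 (by linarith)) hX0
  have hn : (0 : ℝ) < Fintype.card V := by
    have : 0 < Fintype.card V := Fintype.card_pos_iff.2 ⟨v⟩
    exact_mod_cast this
  by_cases hA : γ ^ 2 / 8 * (X.card * (X.card - 1) * Y.card) ≤ ((hsA E X Y).card : ℝ)
  · have hYZ' : (((Y ×ˢ Z).filter (fun p => ({v, p.1, p.2} : Finset V) ∈ E)).card : ℝ)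
        ≤ γ ^ 2 / 80 * (Y.card * Z.card) := by
      rw [dLink, div_le_iff₀ (by positivity)] at hdYZ
      exact hdYZ
    have hXY' : (((X ×ˢ Y).filter (fun p => ({v, p.1, p.2} : Finset V) ∈ E)).card : ℝ)
        ≤ γ ^ 2 / 80 * (X.card * Y.card) := by
      rw [dLink, div_le_iff₀ (by positivity)] at hdXY
      exact hdXY
    have hXZ' : (((X ×ˢ Z).filter (fun p => ({v, p.1, p.2} : Finset V) ∉ E)).card : ℝ)
        ≤ γ ^ 2 / 80 * (X.card * Z.card) := by
      rw [dLink, ge_iff_le, le_div_iff₀ (by positivity), eLink] at hdXZ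
      have h := card_filter_add_card_filter_not (s := X ×ˢ Z)
        (fun p => ({v, p.1, p.2} : Finset V) ∈ E)
      rw [card_product] at h
      rify at h
      linarith
    have key := hs_caseA E hE γ v X Y Z hvX hvY hvZ hXY hXZ hYZ hX2 hXZ' hYZ' hXY' hA
    by_cases h2 : γ ^ 2 / 128 * ((X.card : ℝ) ^ 2 * Y.card * Z.card) ≤ inducedD2Count E
    · left
      refine le_trans (mul_le_mul_of_nonneg_left ?_ (by positivity)) h2
      exact (min_le_left _ _).trans (min_le_left _ _)
    · right
      have h3 : γ ^ 2 / 128 * ((X.card : ℝ) ^ 2 * Y.card * Z.card) ≤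
        Fintype.card V * inducedD2CountVia E v := by linarith
      have h4 : γ ^ 2 / 128 * (1 / (Fintype.card V : ℝ)) * ((X.card : ℝ) ^ 2 * Y.card * Z.card) ≤
          inducedD2CountVia E v := by
        rw [show γ ^ 2 / 128 * (1 / (Fintype.card V : ℝ)) * ((X.card : ℝ) ^ 2 * Y.card * Z.card)
          = (γ ^ 2 / 128 * ((X.card : ℝ) ^ 2 * Y.card * Z.card)) / Fintype.card V by ring,
          div_le_iff₀ hn]
        linarith
      exact le_trans (mul_le_mul_of_nonneg_left (min_le_left _ _) (by positivity)) h4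
  · left
    push Not at hA
    have hd : dXXY E X Y ≤ γ := by
      rw [hs_d E hE X Y hXY, div_le_iff₀ hpx]
      refine hA.le.trans (mul_le_mul_of_nonneg_right ?_ hpx.le)
      nlinarith
    have hd2 : γ < dXXY E Y X := by
      by_contra hcon
      exact hγ1 ⟨hd, not_lt.1 hcon⟩
    rw [hs_d E hE Y X hXY.symm, lt_div_iff₀ hpy] at hd2
    have key := hs_caseB E hE γ hγ X Y hXY hX' hY2 hA.le hd2.le
    have hp : 0 ≤ γ ^ 2 * ((X.card : ℝ) ^ 2 * (Y.card : ℝ) ^ 2) := by positivity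
    refine le_trans (mul_le_mul_of_nonneg_left (min_le_right _ _) (by positivity)) ?_
    linarith
end
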